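/- There exist absolute constants c > 0 and c' > 0 such that for every odd prime p and every A ⊆ F_p with 2 ≤ |A| ≤ p^{9/16}, one has |(A−A)(A−A)| ≥ c'·min{p, |A|^{3/2+c}}. -/

import Mathlib

open Finset

/-- The difference set `S − T = {s − t : s ∈ S, t ∈ T}`. -/
def diffSet (p : ℕ) (S T : Finset (ZMod p)) : Finset (ZMod p) :=
  (S ×ˢ T).image fun x => x.1 - x.2

/-- The product set `S·T = {s·t : s ∈ S, t ∈ T}`. -/
def prodSet (p : ℕ) (S T : Finset (ZMod p)) : Finset (ZMod p) :=
  (S ×ˢ T).image fun x => x.1 * x.2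


section alg
variable {K : Type*} [Field K]

theorem rd_finrank (D : ℕ) :
    6 * Module.finrank K (MvPolynomial.restrictTotalDegree (Fin 3) K D) =
      (D + 1) * (D + 2) * (D + 3) := by
  classical
  have hset : ({n : Fin 3 →₀ ℕ | (n.sum fun _ e => e) ≤ D}) =
      (((Finset.range (D + 1)).biUnion fun i => (univ : Finset (Fin 3)).finsuppAntidiag i :
        Finset (Fin 3 →₀ ℕ)) : Set (Fin 3 →₀ ℕ)) := by
    ext n
    simp [Finsupp.sum_fintype]
  have h1 : Module.finrank K (MvPolynomial.restrictTotalDegree (Fin 3) K D) =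
      ((Finset.range (D + 1)).biUnion fun i => (univ : Finset (Fin 3)).finsuppAntidiag i).card := by
    rw [MvPolynomial.restrictTotalDegree, hset,
      Module.finrank_eq_card_basis (MvPolynomial.basisRestrictSupport K _)]
    simp
  rw [h1, Finset.card_biUnion]
  · simp only [Finset.card_finsuppAntidiag_nat_eq_choose]
    clear h1 hset
    induction D with
    | zero => simp
    | succ D ih =>
      rw [Finset.sum_range_succ, mul_add, ih]
      have : (#(univ : Finset (Fin 3)) + (D + 1) - 1).choose (D + 1) * 2 = (D + 3) * (D + 2) := by
        simp only [Finset.card_univ, Fintype.card_fin]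
        have e : 3 + (D + 1) - 1 = (D + 1) + 2 := by omega
        rw [e, Nat.choose_symm_add, Nat.choose_two_right]
        have := Nat.even_mul_pred_self (D + 1 + 2)
        rw [Nat.div_mul_cancel this.two_dvd]
        simp
      nlinarith
  · intro i _ j _ hij
    rw [Function.onFun, Finset.disjoint_left]
    intro n h1 h2
    simp at h1 h2
    omega

/-- restriction to a blue line -/
noncomputable def rdbl (l : K × K × K) : MvPolynomial (Fin 3) K →ₐ[K] Polynomial K :=
  MvPolynomial.aeval ![Polynomial.X, Polynomial.C l.1,
    Polynomial.C l.2.1 - Polynomial.C l.2.2 * Polynomial.X]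

/-- restriction to a red line -/
noncomputable def rdrl (l : K × K × K) : MvPolynomial (Fin 3) K →ₐ[K] Polynomial K :=
  MvPolynomial.aeval ![Polynomial.C l.1, Polynomial.X,
    Polynomial.C l.2.1 - Polynomial.C l.2.2 * Polynomial.X]

theorem rd_lin_deg (t a : K) :
   (Polynomial.C t - Polynomial.C a * Polynomial.X : Polynomial K).natDegree ≤ 1 := by
  compute_degree

theorem rdbl_deg (l : K × K × K) (F : MvPolynomial (Fin 3) K) :
    (rdbl l F).natDegree ≤ F.totalDegree := by
  have := MvPolynomial.aeval_natDegree_le (n := 1) F le_rfl ![Polynomial.X, Polynomial.C l.1,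
    Polynomial.C l.2.1 - Polynomial.C l.2.2 * Polynomial.X] (by
      intro i
      fin_cases i
      · simp
      · simp
      · exact rd_lin_deg _ _)
  rw [mul_one] at this; exact this

theorem rdrl_deg (l : K × K × K) (F : MvPolynomial (Fin 3) K) :
    (rdrl l F).natDegree ≤ F.totalDegree := by
  have := MvPolynomial.aeval_natDegree_le (n := 1) F le_rfl ![Polynomial.C l.1, Polynomial.X,
    Polynomial.C l.2.1 - Polynomial.C l.2.2 * Polynomial.X] (by
      intro i
      fin_cases i
      · simp
      · simp
      · exact rd_lin_deg _ _)
  rw [mul_one] at this; exact this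

theorem rd_meet (lb lr : K × K × K) (h : lr.2.1 - lr.2.2 * lb.1 = lb.2.1 - lb.2.2 * lr.1)
    (F : MvPolynomial (Fin 3) K) :
    (rdrl lr F).eval lb.1 = (rdbl lb F).eval lr.1 := by
  have : ((Polynomial.aeval lb.1).comp (rdrl lr)) = ((Polynomial.aeval lr.1).comp (rdbl lb)) := by
    apply MvPolynomial.algHom_ext
    intro i
    fin_cases i
    · simp [rdbl, rdrl]
    · simp [rdbl, rdrl]
    · simpa [rdbl, rdrl] using h
  have := DFunLike.congr_fun this F
  simpa [Polynomial.aeval_def, Polynomial.eval₂_eq_eval_map] using this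

theorem rdbl_deriv (l : K × K × K) (F : MvPolynomial (Fin 3) K) :
    Polynomial.derivative (rdbl l F) =
      rdbl l (MvPolynomial.pderiv 0 F) - Polynomial.C l.2.2 * rdbl l (MvPolynomial.pderiv 2 F) := by
  induction F using MvPolynomial.induction_on with
  | C a => simp [rdbl]
  | add p q hp hq => simp only [map_add, hp, hq]; ring
  | mul_X p i hp =>
    simp only [map_mul, Polynomial.derivative_mul, hp, MvPolynomial.pderiv_mul, map_add]
    fin_cases i
    · simp [rdbl]; ring
    · simp [rdbl]; ring
    · simp [rdbl]; ring

theorem rdrl_deriv (l : K × K × K) (F : MvPolynomial (Fin 3) K) :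
    Polynomial.derivative (rdrl l F) =
      rdrl l (MvPolynomial.pderiv 1 F) - Polynomial.C l.2.2 * rdrl l (MvPolynomial.pderiv 2 F) := by
  induction F using MvPolynomial.induction_on with
  | C a => simp [rdrl]
  | add p q hp hq => simp only [map_add, hp, hq]; ring
  | mul_X p i hp =>
    simp only [map_mul, Polynomial.derivative_mul, hp, MvPolynomial.pderiv_mul, map_add]
    fin_cases i
    · simp [rdrl]; ring
    · simp [rdrl]; ring
    · simp [rdrl]; ring

theorem rd_exist (R : Finset (K × K × K)) (d : ℕ) (h : 6 * R.card < (d + 2) * (d + 3)) :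
    ∃ F : MvPolynomial (Fin 3) K, F ≠ 0 ∧ F.totalDegree ≤ d ∧ ∀ l ∈ R, rdrl l F = 0 := by
  let φ : MvPolynomial.restrictTotalDegree (Fin 3) K d →ₗ[K] (R × Fin (d + 1) → K) :=
    LinearMap.pi fun x => (Polynomial.lcoeff K x.2).comp
      ((rdrl (x.1 : K × K × K)).toLinearMap.comp (Submodule.subtype _))
  have hlt : Module.finrank K (R × Fin (d + 1) → K) <
      Module.finrank K (MvPolynomial.restrictTotalDegree (Fin 3) K d) := by
    have := rd_finrank (K := K) d
    simp only [Module.finrank_fintype_fun_eq_card, Fintype.card_prod, Fintype.card_coe,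
      Fintype.card_fin]
    nlinarith
  have hk := LinearMap.ker_ne_bot_of_finrank_lt (f := φ) hlt
  obtain ⟨F, hF, hF0⟩ := (Submodule.ne_bot_iff _).1 hk
  have hd := (MvPolynomial.mem_restrictTotalDegree (Fin 3) d F.1).1 F.2
  refine ⟨F.1, fun h => hF0 (Subtype.ext h), hd, ?_⟩
  intro l hl
  ext n
  by_cases hn : n < d + 1
  · have := congrFun (LinearMap.mem_ker.1 hF) (⟨l, hl⟩, ⟨n, hn⟩)
    simpa [φ] using this
  · rw [Polynomial.coeff_eq_zero_of_natDegree_lt]; rfl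
    have := rdrl_deg l F.1
    omega

/-- Wronskian lemma -/
theorem rd_wron (p : ℕ) [Fact p.Prime] [CharP K p] (A B : Polynomial K) (hA : A ≠ 0)
    (dA : A.natDegree < p) (dB : B.natDegree < p)
    (h : A * Polynomial.derivative B = Polynomial.derivative A * B) :
    ∃ c : K, B = Polynomial.C c * A := by
  have key : ∀ B : Polynomial K, B ≠ 0 → B.natDegree < p →
      A * Polynomial.derivative B = Polynomial.derivative A * B → B.natDegree = A.natDegree := by
    intro B hB dB h
    have hX : ∀ Q : Polynomial K, (Polynomial.X * Polynomial.derivative Q).natDegree ≤ Q.natDegree ∧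
        (Polynomial.X * Polynomial.derivative Q).coeff Q.natDegree =
          Q.natDegree * Q.leadingCoeff := by
      intro Q
      constructor
      · refine Polynomial.natDegree_le_iff_coeff_eq_zero.2 ?_
        intro n hn
        obtain ⟨m, rfl⟩ : ∃ m, n = m + 1 := ⟨n - 1, by omega⟩
        rw [Polynomial.coeff_X_mul, Polynomial.coeff_derivative,
          Polynomial.coeff_eq_zero_of_natDegree_lt hn, zero_mul]
      · rcases hq : Q.natDegree with _ | m
        · simp
        · rw [Polynomial.coeff_X_mul, Polynomial.coeff_derivative, Polynomial.leadingCoeff, hq]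
          push_cast; ring
    have h2 : A * (Polynomial.X * Polynomial.derivative B) =
        (Polynomial.X * Polynomial.derivative A) * B := by
      linear_combination Polynomial.X * h
    have h3 := congrArg (fun Q => Polynomial.coeff Q (A.natDegree + B.natDegree)) h2
    rw [Polynomial.coeff_mul_add_eq_of_natDegree_le le_rfl (hX B).1,
      Polynomial.coeff_mul_add_eq_of_natDegree_le (hX A).1 le_rfl, (hX A).2, (hX B).2] at h3
    have h4 : ((B.natDegree : K) - A.natDegree) * (A.leadingCoeff * B.leadingCoeff) = 0 := by
      simp only [Polynomial.leadingCoeff] at *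
      linear_combination h3
    have h5 : (B.natDegree : K) = A.natDegree := by
      rcases mul_eq_zero.1 h4 with h | h
      · exact sub_eq_zero.1 h
      · simp [hA, hB] at h
    have := (CharP.natCast_eq_natCast K p).1 h5
    exact Nat.ModEq.eq_of_lt_of_lt this dB dA
  refine ⟨B.coeff A.natDegree / A.leadingCoeff, ?_⟩
  by_contra hne
  set c := B.coeff A.natDegree / A.leadingCoeff
  have hB' : B - Polynomial.C c * A ≠ 0 := sub_ne_zero.2 hne
  have hd : (B - Polynomial.C c * A).natDegree < p := by
    refine lt_of_le_of_lt (Polynomial.natDegree_sub_le _ _) (max_lt dB ?_)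
    exact lt_of_le_of_lt (Polynomial.natDegree_C_mul_le _ _) dA
  have := key _ hB' hd (by simp; linear_combination h)
  have h0 : (B - Polynomial.C c * A).coeff A.natDegree = 0 := by
    have : A.leadingCoeff ≠ 0 := by simpa using hA
    simp only [Polynomial.coeff_sub, Polynomial.coeff_C_mul, c]
    rw [Polynomial.leadingCoeff] at this ⊢
    rw [div_mul_cancel₀ _ this, sub_self]
  rw [← this] at h0
  exact hB' (Polynomial.leadingCoeff_eq_zero.1 h0)

theorem rd_pderiv_deg (i : Fin 3) (F : MvPolynomial (Fin 3) K) :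
    (MvPolynomial.pderiv i F).totalDegree ≤ F.totalDegree - 1 := by
  rw [MvPolynomial.totalDegree, Finset.sup_le_iff]
  intro m hm
  rw [MvPolynomial.mem_support_iff, MvPolynomial.coeff_pderiv] at hm
  have h1 : m + Finsupp.single i 1 ∈ F.support := by
    rw [MvPolynomial.mem_support_iff]
    exact left_ne_zero_of_mul hm
  have := MvPolynomial.le_totalDegree h1
  rw [Finsupp.sum_add_index'] at this
  · simp at this
    omega
  · simp
  · simp

theorem rd_pderiv_zero (p : ℕ) [Fact p.Prime] [CharP K p] (F : MvPolynomial (Fin 3) K)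
    (hd : F.totalDegree < p) (h : ∀ i, MvPolynomial.pderiv i F = 0) : F.totalDegree = 0 := by
  rw [MvPolynomial.totalDegree_eq_zero_iff]
  intro m hm i
  by_contra hne
  have h1 := MvPolynomial.coeff_pderiv (i := i) F (m - Finsupp.single i 1)
  rw [h i, tsub_add_cancel_of_le (by
    rw [Finsupp.single_le_iff]; omega)] at h1
  simp only [MvPolynomial.coeff_zero] at h1
  rcases mul_eq_zero.1 h1.symm with h2 | h2
  · exact (MvPolynomial.mem_support_iff.1 hm) h2
  · have h3 : ((m i : ℕ) : K) = 0 := by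
      rw [← h2]
      simp
      have : 1 ≤ m i := by omega
      push_cast [Nat.cast_sub this]
      ring
    rw [CharP.cast_eq_zero_iff K p] at h3
    have h4 := Nat.le_of_dvd (by omega) h3
    have h5 := MvPolynomial.le_totalDegree hm
    have h6 : m i ≤ m.sum fun _ e => e := by
      rw [Finsupp.sum_fintype _ _ (by simp)]
      exact Finset.single_le_sum (f := fun i => m i) (fun _ _ => Nat.zero_le _) (Finset.mem_univ i)
    omega

theorem rd_pderiv_comm (i j : Fin 3) (F : MvPolynomial (Fin 3) K) :
    MvPolynomial.pderiv i (MvPolynomial.pderiv j F) =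
      MvPolynomial.pderiv j (MvPolynomial.pderiv i F) := by
  by_cases hij : i = j
  · rw [hij]
  ext m
  simp only [MvPolynomial.coeff_pderiv]
  have h1 : m + Finsupp.single i 1 + Finsupp.single j 1 =
    m + Finsupp.single j 1 + Finsupp.single i 1 := add_right_comm _ _ _
  rw [h1]
  simp [hij, Ne.symm hij]
  ring
end alg


section alg2
variable {K : Type*} [Field K]

theorem rdbl_X0 (l : K × K × K) (Q : Polynomial K) :
    rdbl l (Polynomial.aeval (MvPolynomial.X 0) Q) = Q := by
  rw [← Polynomial.aeval_algHom_apply]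
  simp [rdbl]

theorem rd_aevalX_deg (Q : Polynomial K) :
    (Polynomial.aeval (MvPolynomial.X 0 : MvPolynomial (Fin 3) K) Q).totalDegree ≤ Q.natDegree := by
  rw [Polynomial.aeval_eq_sum_range]
  refine (MvPolynomial.totalDegree_finsetSum _ _).trans (Finset.sup_le ?_)
  intro i hi
  refine (MvPolynomial.totalDegree_smul_le _ _).trans ?_
  refine (MvPolynomial.totalDegree_pow _ _).trans ?_
  simp at hi ⊢
  omega

/-- separating form -/
noncomputable def rdsep [DecidableEq K] (l m : K × K × K) : MvPolynomial (Fin 3) K :=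
  if l.1 ≠ m.1 then MvPolynomial.X 1 - MvPolynomial.C m.1 else
    MvPolynomial.X 2 - MvPolynomial.C m.2.1 + MvPolynomial.C m.2.2 * MvPolynomial.X 0

theorem rdsep_deg [DecidableEq K] (l m : K × K × K) : (rdsep l m).totalDegree ≤ 1 := by
  unfold rdsep
  split_ifs
  · refine (MvPolynomial.totalDegree_sub _ _).trans ?_
    simp
  · refine (MvPolynomial.totalDegree_add _ _).trans (max_le ?_ ?_)
    · refine (MvPolynomial.totalDegree_sub _ _).trans ?_
      simp
    · refine (MvPolynomial.totalDegree_mul _ _).trans ?_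
      simp

theorem rdsep_self [DecidableEq K] (l m : K × K × K) : rdbl m (rdsep l m) = 0 := by
  unfold rdsep
  split_ifs
  · simp [rdbl]
  · simp [rdbl]

theorem rdsep_ne [DecidableEq K] (l m : K × K × K) (h : l ≠ m) : rdbl l (rdsep l m) ≠ 0 := by
  unfold rdsep
  split_ifs with h1
  · simp only [rdbl, map_sub, MvPolynomial.aeval_X, MvPolynomial.aeval_C]
    simp only [Matrix.cons_val, Polynomial.algebraMap_eq]
    rw [← Polynomial.C_sub]
    simpa [sub_eq_zero] using h1
  · intro h2
    apply h
    have h3 : Polynomial.C (l.2.1 - m.2.1) - Polynomial.C (l.2.2 - m.2.2) * Polynomial.X = 0 := by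
      rw [← h2]
      simp [rdbl]
      ring
    have c0 := congrArg (fun Q => Polynomial.coeff Q 0) h3
    have c1 := congrArg (fun Q => Polynomial.coeff Q 1) h3
    simp [Polynomial.coeff_C, sub_eq_zero] at c0 c1
    push Not at h1
    exact Prod.ext h1 (Prod.ext c0 c1.symm)

set_option maxHeartbeats 2000000 in
theorem rd_bezout (F G : MvPolynomial (Fin 3) K) (hF : Irreducible F) (e' : ℕ)
    (hG : G.totalDegree ≤ e') (hFG : ¬ F ∣ G) (S : Finset (K × K × K))
    (hS : ∀ l ∈ S, rdbl l F = 0 ∧ rdbl l G = 0) : S.card ≤ F.totalDegree * e' := by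
  classical
  by_contra hcard
  push Not at hcard
  obtain ⟨T, hTS, hT⟩ := Finset.exists_subset_card_eq (Nat.succ_le_of_lt hcard)
  replace hS : ∀ l ∈ T, rdbl l F = 0 ∧ rdbl l G = 0 := fun l hl => hS l (hTS hl)
  clear hTS hcard S
  have hF0 := hF.ne_zero
  set e := F.totalDegree with he
  obtain ⟨x, hx⟩ : ∃ x, x = (e * e' + 2) * (e * e' + 2) := ⟨_, rfl⟩
  obtain ⟨m, hm⟩ : ∃ m, m + e * e' = x + e + e' + 1 := ⟨x + e + e' + 1 - e * e', by
    have : e * e' ≤ x := by rw [hx]; nlinarith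
    omega⟩
  let h : T → MvPolynomial (Fin 3) K := fun i => ∏ j ∈ univ.erase i, rdsep i.1 j.1
  have hdeg : ∀ i, (h i).totalDegree ≤ e * e' := by
    intro i
    refine (MvPolynomial.totalDegree_finsetProd _ _).trans ?_
    refine (Finset.sum_le_sum (fun j _ => rdsep_deg i.1 j.1)).trans ?_
    simp [hT]
  have hself : ∀ i, rdbl i.1 (h i) ≠ 0 := by
    intro i
    simp only [h, map_prod]
    rw [Finset.prod_ne_zero_iff]
    intro j hj
    apply rdsep_ne
    intro hij
    simp at hj
    exact hj (Subtype.ext hij.symm)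
  have hoth : ∀ i j, j ≠ i → rdbl j.1 (h i) = 0 := by
    intro i j hij
    simp only [h, map_prod]
    exact Finset.prod_eq_zero (i := j) (by simp [hij]) (rdsep_self _ _)
  let P := fun n => MvPolynomial.restrictTotalDegree (Fin 3) K n
  let ψ0 : (Fin m → K) →ₗ[K] MvPolynomial (Fin 3) K :=
    (Polynomial.aeval (MvPolynomial.X 0 : MvPolynomial (Fin 3) K)).toLinearMap.comp
      ((Submodule.subtype _).comp (Polynomial.degreeLTEquiv K m).symm.toLinearMap)
  let φ : (P (x + e')) × (P (x + e)) × (T → Fin m → K) →ₗ[K] MvPolynomial (Fin 3) K :=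
    ((LinearMap.mulLeft K F).comp (Submodule.subtype _)).coprod
      (((LinearMap.mulLeft K G).comp (Submodule.subtype _)).coprod
        (∑ i, (LinearMap.mulLeft K (h i)).comp (ψ0.comp (LinearMap.proj i))))
  have hφ : ∀ A B c, φ (A, B, c) = F * A.1 + (G * B.1 + ∑ i, h i * ψ0 (c i)) := by
    intro A B c
    simp [φ]
  have hψdeg : ∀ c : Fin m → K, c ≠ 0 → (ψ0 c).totalDegree + 1 ≤ m := by
    intro c hc
    have h1 := rd_aevalX_deg ((Polynomial.degreeLTEquiv K m).symm c).1
    have h2 := ((Polynomial.degreeLTEquiv K m).symm c).2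
    rw [Polynomial.mem_degreeLT] at h2
    have h3 : (((Polynomial.degreeLTEquiv K m).symm c).1).natDegree < m := by
      rw [Polynomial.natDegree_lt_iff_degree_lt]
      · exact h2
      · intro h0
        apply hc
        have : (Polynomial.degreeLTEquiv K m).symm c = 0 := Subtype.ext h0
        simpa using this
    have h4 : (ψ0 c).totalDegree ≤ (((Polynomial.degreeLTEquiv K m).symm c).1).natDegree := h1
    omega
  have hψbl : ∀ (l) (c : Fin m → K), rdbl l (ψ0 c) = ((Polynomial.degreeLTEquiv K m).symm c).1 := by
    intro l c
    exact rdbl_X0 _ _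
  have hrange : LinearMap.range φ ≤ P (x + e + e') := by
    rintro _ ⟨⟨A, B, c⟩, rfl⟩
    rw [hφ]
    have hA := (MvPolynomial.mem_restrictTotalDegree (Fin 3) _ A.1).1 A.2
    have hB := (MvPolynomial.mem_restrictTotalDegree (Fin 3) _ B.1).1 B.2
    refine Submodule.add_mem _ ?_ (Submodule.add_mem _ ?_ (Submodule.sum_mem _ ?_))
    · rw [MvPolynomial.mem_restrictTotalDegree]
      refine (MvPolynomial.totalDegree_mul _ _).trans ?_
      omega
    · rw [MvPolynomial.mem_restrictTotalDegree]
      refine (MvPolynomial.totalDegree_mul _ _).trans ?_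
      omega
    · intro i _
      by_cases hc : c i = 0
      · rw [hc]; simp
      rw [MvPolynomial.mem_restrictTotalDegree]
      refine (MvPolynomial.totalDegree_mul _ _).trans ?_
      have := hdeg i
      have := hψdeg (c i) hc
      omega
  let ψ : P x →ₗ[K] (P (x + e')) × (P (x + e)) × (T → Fin m → K) :=
    LinearMap.prod (LinearMap.restrict (LinearMap.mulLeft K (-G)) (by
      intro C hC
      have hC := (MvPolynomial.mem_restrictTotalDegree (Fin 3) _ C).1 hC
      rw [MvPolynomial.mem_restrictTotalDegree]
      refine (MvPolynomial.totalDegree_mul _ _).trans ?_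
      rw [MvPolynomial.totalDegree_neg]
      omega)) (LinearMap.prod (LinearMap.restrict (LinearMap.mulLeft K F) (by
      intro C hC
      have hC := (MvPolynomial.mem_restrictTotalDegree (Fin 3) _ C).1 hC
      rw [MvPolynomial.mem_restrictTotalDegree]
      refine (MvPolynomial.totalDegree_mul _ _).trans ?_
      omega)) 0)
  have hker : LinearMap.ker φ ≤ LinearMap.range ψ := by
    rintro ⟨A, B, c⟩ hk
    rw [LinearMap.mem_ker, hφ] at hk
    have hA := (MvPolynomial.mem_restrictTotalDegree (Fin 3) _ A.1).1 A.2
    have hB := (MvPolynomial.mem_restrictTotalDegree (Fin 3) _ B.1).1 B.2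
    have hc : c = 0 := by
      funext i
      have h1 := congrArg (rdbl i.1) hk
      simp only [map_add, map_mul, map_sum, (hS i.1 i.2).1, (hS i.1 i.2).2, zero_mul, zero_add,
        map_zero] at h1
      rw [Finset.sum_eq_single i (by
        intro j _ hj
        rw [hoth j i hj.symm, zero_mul]) (by simp)] at h1
      have h2 := (mul_eq_zero.1 h1).resolve_left (hself i)
      rw [hψbl] at h2
      have : (Polynomial.degreeLTEquiv K m).symm (c i) = 0 := Subtype.ext h2
      simpa using this
    subst hc
    simp only [Pi.zero_apply, map_zero, mul_zero, Finset.sum_const_zero, add_zero] at hk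
    have hdvd : F ∣ G * B.1 := ⟨-A.1, by linear_combination hk⟩
    obtain ⟨C, hC⟩ := (hF.prime.dvd_or_dvd hdvd).resolve_left hFG
    have hAC : A.1 = -G * C := by
      have : F * (A.1 - (-G * C)) = 0 := by
        rw [hC] at hk
        linear_combination hk
      exact sub_eq_zero.1 ((mul_eq_zero.1 this).resolve_left hF0)
    have hCd : C.totalDegree ≤ x := by
      by_cases hC0 : C = 0
      · rw [hC0]; simp
      rw [hC, MvPolynomial.totalDegree_mul_of_isDomain hF0 hC0] at hB
      omega
    refine ⟨⟨C, (MvPolynomial.mem_restrictTotalDegree (Fin 3) _ C).2 hCd⟩, ?_⟩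
    refine Prod.ext (Subtype.ext ?_) (Prod.ext (Subtype.ext ?_) rfl)
    · exact hAC.symm
    · exact hC.symm
  have r1 := LinearMap.finrank_range_add_finrank_ker φ
  have r2 : Module.finrank K (LinearMap.range φ) ≤ Module.finrank K (P (x + e + e')) :=
    Submodule.finrank_mono hrange
  have r3 : Module.finrank K (LinearMap.ker φ) ≤ Module.finrank K (P x) :=
    (Submodule.finrank_mono hker).trans (LinearMap.finrank_range_le ψ)
  have r4 : Module.finrank K (T → Fin m → K) = (e * e' + 1) * m := by
    rw [Module.finrank_pi_fintype]
    simp [hT]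
  rw [Module.finrank_prod, Module.finrank_prod, r4] at r1
  have n1 := rd_finrank (K := K) x
  have n2 := rd_finrank (K := K) (x + e')
  have n3 := rd_finrank (K := K) (x + e)
  have n4 := rd_finrank (K := K) (x + e + e')
  have key : (x + e' + 1) * (x + e' + 2) * (x + e' + 3) + (x + e + 1) * (x + e + 2) * (x + e + 3)
     + 6 * ((e * e' + 1) * m) ≤ (x + e + e' + 1) * (x + e + e' + 2) * (x + e + e' + 3) +
      (x + 1) * (x + 2) * (x + 3) := by
    rw [← n1, ← n2, ← n3, ← n4]
    simp only [P] at *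
    linarith
  have key2 : (e * e' + 1) * m * 6 ≤ 3 * (e * e') * (2 * x + e + e') + 12 * (e * e') := by
    nlinarith
  obtain ⟨q, hq⟩ : ∃ q, q = e * e' := ⟨_, rfl⟩
  rw [← hq] at hm key2 hx
  have : (q + 1) * (m + q) * 6 = (q + 1) * (x + e + e' + 1) * 6 := by rw [hm]
  nlinarith
end alg2


section alg3
variable {K : Type*} [Field K]

theorem rd_dvd_small (F Q : MvPolynomial (Fin 3) K) (h : F ∣ Q)
    (hd : Q.totalDegree < F.totalDegree) : Q = 0 := by
  by_contra hQ
  obtain ⟨C, rfl⟩ := h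
  have hF : F ≠ 0 := left_ne_zero_of_mul hQ
  have hC : C ≠ 0 := right_ne_zero_of_mul hQ
  rw [MvPolynomial.totalDegree_mul_of_isDomain hF hC] at hd
  omega

theorem rd_zeros [DecidableEq K] (Q : Polynomial K) (n : ℕ) (hn : Q.natDegree ≤ n)
    (N : Finset (K × K × K))
    (hinj : Set.InjOn Prod.fst (N : Set (K × K × K))) (hQ : Q ≠ 0) :
    (N.filter fun r => Q.eval r.1 = 0).card ≤ n := by
  by_contra hc
  push Not at hc
  apply hQ
  refine Polynomial.eq_zero_of_natDegree_lt_card_of_eval_eq_zero' Q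
    ((N.filter fun r => Q.eval r.1 = 0).image Prod.fst) ?_ ?_
  · intro z hz
    simp only [Finset.mem_image, Finset.mem_filter] at hz
    obtain ⟨r, hr, rfl⟩ := hz
    exact hr.2
  · rw [Finset.card_image_of_injOn]
    · omega
    · intro a ha b hb hab
      simp at ha hb
      exact hinj (by simpa using ha.1) (by simpa using hb.1) hab

/-- The flecnode-like polynomial. -/
noncomputable def rdG (F : MvPolynomial (Fin 3) K) : MvPolynomial (Fin 3) K :=
  MvPolynomial.pderiv 0 (MvPolynomial.pderiv 0 F) *
      (MvPolynomial.pderiv 2 F * MvPolynomial.pderiv 2 F)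
    - 2 * (MvPolynomial.pderiv 0 F * MvPolynomial.pderiv 2 F *
      MvPolynomial.pderiv 0 (MvPolynomial.pderiv 2 F))
    + MvPolynomial.pderiv 0 F * MvPolynomial.pderiv 0 F *
      MvPolynomial.pderiv 2 (MvPolynomial.pderiv 2 F)

theorem rdG_deg (F : MvPolynomial (Fin 3) K) : (rdG F).totalDegree ≤ 3 * F.totalDegree := by
  have h0 := rd_pderiv_deg 0 F
  have h2 := rd_pderiv_deg 2 F
  have h00 := rd_pderiv_deg 0 (MvPolynomial.pderiv 0 F)
  have h02 := rd_pderiv_deg 0 (MvPolynomial.pderiv 2 F)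
  have h22 := rd_pderiv_deg 2 (MvPolynomial.pderiv 2 F)
  have mulb : ∀ A B : MvPolynomial (Fin 3) K, ∀ a b : ℕ, A.totalDegree ≤ a → B.totalDegree ≤ b →
      (A * B).totalDegree ≤ a + b := fun A B a b ha hb =>
    (MvPolynomial.totalDegree_mul _ _).trans (Nat.add_le_add ha hb)
  set e := F.totalDegree
  have two : (2 : MvPolynomial (Fin 3) K).totalDegree ≤ 0 := by
    have : (2 : MvPolynomial (Fin 3) K) = MvPolynomial.C 2 :=
      (map_ofNat MvPolynomial.C 2).symm
    rw [this]; simp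
  have k00 : (MvPolynomial.pderiv 0 (MvPolynomial.pderiv 0 F)).totalDegree ≤ e := by omega
  have k02 : (MvPolynomial.pderiv 0 (MvPolynomial.pderiv 2 F)).totalDegree ≤ e := by omega
  have k22 : (MvPolynomial.pderiv 2 (MvPolynomial.pderiv 2 F)).totalDegree ≤ e := by omega
  have k0 : (MvPolynomial.pderiv 0 F).totalDegree ≤ e := by omega
  have k2 : (MvPolynomial.pderiv 2 F).totalDegree ≤ e := by omega
  unfold rdG
  refine (MvPolynomial.totalDegree_add _ _).trans (max_le ((MvPolynomial.totalDegree_sub _ _).trans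
    (max_le ?_ ?_)) ?_)
  · have := mulb _ _ _ _ k00 (mulb _ _ _ _ k2 k2)
    omega
  · have := mulb _ _ _ _ two (mulb _ _ _ _ (mulb _ _ _ _ k0 k2) k02)
    omega
  · have := mulb _ _ _ _ (mulb _ _ _ _ k0 k0) k22
    omega

theorem rdbl_first (l : K × K × K) (F : MvPolynomial (Fin 3) K) (h : rdbl l F = 0) :
    rdbl l (MvPolynomial.pderiv 0 F) = Polynomial.C l.2.2 * rdbl l (MvPolynomial.pderiv 2 F) := by
  have := rdbl_deriv l F
  rw [h, Polynomial.derivative_zero] at this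
  linear_combination -this

theorem rdbl_second (l : K × K × K) (F : MvPolynomial (Fin 3) K) (h : rdbl l F = 0) :
    rdbl l (MvPolynomial.pderiv 0 (MvPolynomial.pderiv 0 F)) =
      2 * Polynomial.C l.2.2 * rdbl l (MvPolynomial.pderiv 0 (MvPolynomial.pderiv 2 F)) -
      Polynomial.C l.2.2 ^ 2 * rdbl l (MvPolynomial.pderiv 2 (MvPolynomial.pderiv 2 F)) := by
  have h1 := congrArg Polynomial.derivative (rdbl_first l F h)
  rw [Polynomial.derivative_C_mul, rdbl_deriv, rdbl_deriv, rd_pderiv_comm 2 0 F] at h1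
  linear_combination h1

theorem rdG_bl (l : K × K × K) (F : MvPolynomial (Fin 3) K) (h : rdbl l F = 0) :
    rdbl l (rdG F) = 0 := by
  unfold rdG
  simp only [map_add, map_sub, map_mul, map_ofNat]
  rw [rdbl_second l F h, rdbl_first l F h]
  ring

theorem rd_ode (l : K × K × K) (F : MvPolynomial (Fin 3) K) (h : rdbl l F = 0)
    (hG : F ∣ rdG F) (f g : Polynomial K) (hf : f = rdbl l (MvPolynomial.pderiv 1 F))
    (hg : g = rdbl l (MvPolynomial.pderiv 2 F)) (hg0 : g ≠ 0) :
    g * (Polynomial.derivative (Polynomial.derivative f) * g -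
      f * Polynomial.derivative (Polynomial.derivative g)) =
    2 * Polynomial.derivative g * (Polynomial.derivative f * g - f * Polynomial.derivative g) := by
  obtain ⟨H, hH⟩ := hG
  have s1 : rdbl l (MvPolynomial.pderiv 1 (rdG F)) = f * rdbl l H := by
    rw [hH, MvPolynomial.pderiv_mul, map_add, map_mul, map_mul, h, ← hf]; ring
  have s2 : rdbl l (MvPolynomial.pderiv 2 (rdG F)) = g * rdbl l H := by
    rw [hH, MvPolynomial.pderiv_mul, map_add, map_mul, map_mul, h, ← hg]; ring
  have s3 : g * rdbl l (MvPolynomial.pderiv 1 (rdG F)) =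
      f * rdbl l (MvPolynomial.pderiv 2 (rdG F)) := by
    rw [s1, s2]; ring
  have f1 := congrArg Polynomial.derivative hf
  have g1 := congrArg Polynomial.derivative hg
  rw [rdbl_deriv] at f1 g1
  have f2 := congrArg Polynomial.derivative f1
  have g2 := congrArg Polynomial.derivative g1
  rw [Polynomial.derivative_sub, Polynomial.derivative_C_mul, rdbl_deriv, rdbl_deriv] at f2 g2
  have c2 : (MvPolynomial.pderiv 1) (2 : MvPolynomial (Fin 3) K) = 0 := by
    have : (2 : MvPolynomial (Fin 3) K) = MvPolynomial.C 2 :=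
      (map_ofNat MvPolynomial.C 2).symm
    rw [this, MvPolynomial.pderiv_C]
  have c2' : (MvPolynomial.pderiv 2) (2 : MvPolynomial (Fin 3) K) = 0 := by
    have : (2 : MvPolynomial (Fin 3) K) = MvPolynomial.C 2 :=
      (map_ofNat MvPolynomial.C 2).symm
    rw [this, MvPolynomial.pderiv_C]
  unfold rdG at s3
  simp only [map_add, map_sub, MvPolynomial.pderiv_mul, map_mul, c2, c2', map_ofNat, map_zero] at s3
  have e0 := rdbl_first l F h
  have e00 := rdbl_second l F h
  have q10 := rd_pderiv_comm 1 0 F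
  have q12 := rd_pderiv_comm 1 2 F
  have q20 := rd_pderiv_comm 2 0 F
  have q100 := rd_pderiv_comm 1 0 (MvPolynomial.pderiv 0 F)
  have q102 := rd_pderiv_comm 1 0 (MvPolynomial.pderiv 2 F)
  have q122 := rd_pderiv_comm 1 2 (MvPolynomial.pderiv 2 F)
  have q200 := rd_pderiv_comm 2 0 (MvPolynomial.pderiv 0 F)
  have q202 := rd_pderiv_comm 2 0 (MvPolynomial.pderiv 2 F)
  have q201 := rd_pderiv_comm 2 0 (MvPolynomial.pderiv 1 F)
  rw [q10] at q100
  rw [q12] at q102 q122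
  rw [q20] at q200
  rw [q100, q102, q122, q200, q202, q10, q12, q20, e0, e00, ← hg] at s3
  rw [q201] at f2
  rw [q202] at g2
  apply mul_left_cancel₀ hg0
  rw [f2, g2, f1, g1]
  linear_combination s3
end alg3


section alg4
variable {K : Type*} [Field K]

set_option maxHeartbeats 2000000 in
theorem rd_core [DecidableEq K] (p : ℕ) [Fact p.Prime] [CharP K p] (F H : MvPolynomial (Fin 3) K)
    (hF : Irreducible F) (j d k : ℕ) (he1 : 1 ≤ F.totalDegree) (hed : F.totalDegree ≤ d)
    (hHd : H.totalDegree ≤ d) (hFH : ¬ F ∣ H) (hp : 2 * d + 1 < p)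
    (S : Finset (K × K × K)) (hScard : 6 * d * F.totalDegree ≤ S.card)
    (hSF : ∀ l ∈ S, rdbl l F = 0)
    (N : K × K × K → Finset (K × K × K))
    (hNmeet : ∀ l ∈ S, ∀ r ∈ N l, r.2.1 - r.2.2 * l.1 = l.2.1 - l.2.2 * r.1)
    (hNinj : ∀ l ∈ S, Set.InjOn Prod.fst (N l : Set (K × K × K)))
    (hNcard : ∀ l ∈ S, 2 * d + k < (N l).card)
    (hN0 : ∀ l ∈ S, ∀ r ∈ N l, rdrl r (F ^ j * H) = 0) :
    ∃ l ∈ S, ∃ c c0 : K, ∃ M ⊆ N l, k < M.card ∧ ∀ r ∈ M, r.2.2 = c * r.1 + c0 := by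
  set e := F.totalDegree with he
  have hSH : (S.filter fun l => rdbl l H = 0).card ≤ e * d :=
    rd_bezout F H hF d hHd hFH _ (by
      intro l hl
      rw [Finset.mem_filter] at hl
      exact ⟨hSF l hl.1, hl.2⟩)
  have hee : e * e ≤ e * d := Nat.mul_le_mul le_rfl hed
  have hed1 : 1 ≤ e * d := Nat.mul_pos he1 (by omega)
  have h6 : 6 * d * e = 6 * (e * d) := by ring
  have hstar : ∀ l ∈ S, ∀ r ∈ N l, (rdbl l H).eval r.1 ≠ 0 →
      (rdbl l (MvPolynomial.pderiv 1 F)).eval r.1 =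
        r.2.2 * (rdbl l (MvPolynomial.pderiv 2 F)).eval r.1 := by
    intro l hl r hr hH
    have hm := hNmeet l hl r hr
    have h0 := hN0 l hl r hr
    rw [map_mul, map_pow] at h0
    have hH' : rdrl r H ≠ 0 := by
      intro h
      apply hH
      rw [← rd_meet l r hm, h]; simp
    have hF0 : rdrl r F = 0 := eq_zero_of_pow_eq_zero ((mul_eq_zero.1 h0).resolve_right hH')
    have h1 := rdrl_deriv r F
    rw [hF0, Polynomial.derivative_zero] at h1
    have h2 := congrArg (Polynomial.eval l.1) h1
    rw [Polynomial.eval_sub, Polynomial.eval_mul, rd_meet l r hm, rd_meet l r hm] at h2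
    simp at h2
    linear_combination -h2
  have hsmall : ∀ i, MvPolynomial.pderiv i F ≠ 0 → ¬ F ∣ MvPolynomial.pderiv i F := by
    intro i h0 h1
    apply h0
    apply rd_dvd_small F _ h1
    have := rd_pderiv_deg i F
    omega
  have hpd : ∀ i, (MvPolynomial.pderiv i F).totalDegree ≤ e := by
    intro i
    have := rd_pderiv_deg i F
    omega
  have hι : MvPolynomial.pderiv 2 F ≠ 0 := by
    intro hι
    have hz : MvPolynomial.pderiv 0 F = 0 := by
      by_contra h0
      have := rd_bezout F _ hF e (hpd 0) (hsmall 0 h0) S (by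
        intro l hl
        refine ⟨hSF l hl, ?_⟩
        rw [rdbl_first l F (hSF l hl), hι]
        simp)
      rw [← he] at this
      omega
    have hs : MvPolynomial.pderiv 1 F = 0 := by
      by_contra h0
      have := rd_bezout F _ hF e (hpd 1) (hsmall 1 h0) (S.filter fun l => ¬ rdbl l H = 0) (by
        intro l hl
        rw [Finset.mem_filter] at hl
        refine ⟨hSF l hl.1, ?_⟩
        by_contra hne
        have c1 := rd_zeros _ d (by
          exact (rdbl_deg l _).trans ((hpd 1).trans hed)) (N l) (hNinj l hl.1) hne
        have c2 := rd_zeros _ d ((rdbl_deg l _).trans hHd) (N l) (hNinj l hl.1) hl.2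
        have c3 := hNcard l hl.1
        have c4 : N l ⊆ ((N l).filter fun r =>
            Polynomial.eval r.1 (rdbl l (MvPolynomial.pderiv 1 F)) = 0) ∪
            ((N l).filter fun r => Polynomial.eval r.1 (rdbl l H) = 0) := by
          intro r hr
          rw [Finset.mem_union, Finset.mem_filter, Finset.mem_filter]
          by_cases hH : Polynomial.eval r.1 (rdbl l H) = 0
          · exact Or.inr ⟨hr, hH⟩
          · left
            refine ⟨hr, ?_⟩
            rw [hstar l hl.1 r hr hH, hι]
            simp
        have c5 := (Finset.card_le_card c4).trans (Finset.card_union_le _ _)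
        omega)
      rw [← he] at this
      have h2 := Finset.card_filter_add_card_filter_not (s := S) (fun l => rdbl l H = 0)
      omega
    have := rd_pderiv_zero p F (by omega) (by
      intro i
      fin_cases i
      · exact hz
      · exact hs
      · exact hι)
    omega
  have hG : F ∣ rdG F := by
    by_contra h0
    have := rd_bezout F _ hF _ (rdG_deg F) h0 S (fun l hl => ⟨hSF l hl, rdG_bl l F (hSF l hl)⟩)
    rw [← he] at this
    have h3 : e * (3 * e) = 3 * (e * e) := by ring
    omega
  have hSι : (S.filter fun l => rdbl l (MvPolynomial.pderiv 2 F) = 0).card ≤ e * e :=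
    rd_bezout F _ hF e (hpd 2) (hsmall 2 hι) _ (by
      intro l hl
      rw [Finset.mem_filter] at hl
      exact ⟨hSF l hl.1, hl.2⟩)
  obtain ⟨l, hl, hlH, hlι⟩ : ∃ l ∈ S, rdbl l H ≠ 0 ∧ rdbl l (MvPolynomial.pderiv 2 F) ≠ 0 := by
    by_contra hcon
    push Not at hcon
    have c4 : S ⊆ (S.filter fun l => rdbl l H = 0) ∪
        (S.filter fun l => rdbl l (MvPolynomial.pderiv 2 F) = 0) := by
      intro l hl
      rw [Finset.mem_union, Finset.mem_filter, Finset.mem_filter]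
      by_cases hH : rdbl l H = 0
      · exact Or.inl ⟨hl, hH⟩
      · exact Or.inr ⟨hl, hcon l hl hH⟩
    have c5 := (Finset.card_le_card c4).trans (Finset.card_union_le _ _)
    omega
  have hode := rd_ode l F (hSF l hl) hG _ _ rfl rfl hlι
  set f := rdbl l (MvPolynomial.pderiv 1 F) with hf
  set g := rdbl l (MvPolynomial.pderiv 2 F) with hg
  have df : f.natDegree ≤ e := (rdbl_deg l _).trans (hpd 1)
  have dg : g.natDegree ≤ d - 1 := by
    have h : (rdbl l (MvPolynomial.pderiv 2 F)).natDegree ≤ F.totalDegree - 1 :=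
      (rdbl_deg l _).trans (rd_pderiv_deg 2 F)
    rw [← he] at h
    exact h.trans (by omega)
  have dfd : f.natDegree ≤ d - 1 := by
    have h : (rdbl l (MvPolynomial.pderiv 1 F)).natDegree ≤ F.totalDegree - 1 :=
      (rdbl_deg l _).trans (rd_pderiv_deg 1 F)
    rw [← he] at h
    exact h.trans (by omega)
  obtain ⟨c, hc⟩ := rd_wron p (g * g)
    (Polynomial.derivative f * g - f * Polynomial.derivative g) (mul_ne_zero hlι hlι)
    (by
      have := Polynomial.natDegree_mul_le (p := g) (q := g)
      omega)
    (by
      have h1 := Polynomial.natDegree_sub_le (Polynomial.derivative f * g)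
        (f * Polynomial.derivative g)
      have h2 := Polynomial.natDegree_mul_le (p := Polynomial.derivative f) (q := g)
      have h3 := Polynomial.natDegree_mul_le (p := f) (q := Polynomial.derivative g)
      have h4 := Polynomial.natDegree_derivative_le f
      have h5 := Polynomial.natDegree_derivative_le g
      omega)
    (by
      simp only [Polynomial.derivative_sub, Polynomial.derivative_mul]
      linear_combination g * hode)
  obtain ⟨c0, hc0⟩ := rd_wron p g (f - Polynomial.C c * Polynomial.X * g) hlι (by omega)
    (by
      have h1 := Polynomial.natDegree_sub_le f (Polynomial.C c * Polynomial.X * g)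
      have h2 := Polynomial.natDegree_mul_le (p := Polynomial.C c * Polynomial.X) (q := g)
      have h3 : (Polynomial.C c * Polynomial.X : Polynomial K).natDegree ≤ 1 := by compute_degree
      omega)
    (by
      simp only [Polynomial.derivative_sub, Polynomial.derivative_mul, Polynomial.derivative_C,
        Polynomial.derivative_X]
      linear_combination hc)
  refine ⟨l, hl, c, c0, (N l).filter fun r => Polynomial.eval r.1 (rdbl l H) ≠ 0 ∧
    Polynomial.eval r.1 g ≠ 0, Finset.filter_subset _ _, ?_, ?_⟩
  · have c1 := rd_zeros _ d (by omega) (N l) (hNinj l hl) hlι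
    have c2 := rd_zeros _ d ((rdbl_deg l _).trans hHd) (N l) (hNinj l hl) hlH
    have c3 := hNcard l hl
    have c4 : N l ⊆ ((N l).filter fun r => Polynomial.eval r.1 (rdbl l H) ≠ 0 ∧
        Polynomial.eval r.1 g ≠ 0) ∪ (((N l).filter fun r => Polynomial.eval r.1 g = 0) ∪
        ((N l).filter fun r => Polynomial.eval r.1 (rdbl l H) = 0)) := by
      intro r hr
      rw [Finset.mem_union, Finset.mem_union, Finset.mem_filter, Finset.mem_filter,
        Finset.mem_filter]
      by_cases hH : Polynomial.eval r.1 (rdbl l H) = 0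
      · exact Or.inr (Or.inr ⟨hr, hH⟩)
      · by_cases hG : Polynomial.eval r.1 g = 0
        · exact Or.inr (Or.inl ⟨hr, hG⟩)
        · exact Or.inl ⟨hr, hH, hG⟩
    have c5 := (Finset.card_le_card c4).trans (Finset.card_union_le _ _)
    have c6 := Finset.card_union_le ((N l).filter fun r => Polynomial.eval r.1 g = 0)
        ((N l).filter fun r => Polynomial.eval r.1 (rdbl l H) = 0)
    omega
  · intro r hr
    rw [Finset.mem_filter] at hr
    have h1 := hstar l hl r hr.1 hr.2.1
    have h2 := congrArg (Polynomial.eval r.1) hc0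
    simp only [Polynomial.eval_sub, Polynomial.eval_mul, Polynomial.eval_C, Polynomial.eval_X] at h2
    rw [← hf, ← hg] at h1
    apply mul_right_cancel₀ hr.2.2
    linear_combination h2 - h1

theorem rd_minfactor [DecidableEq K] (F0 : MvPolynomial (Fin 3) K) (hF0 : F0 ≠ 0) (d : ℕ)
    (hd : F0.totalDegree ≤ d)
    (S : Finset (K × K × K)) (hS : S.Nonempty) (hS0 : ∀ l ∈ S, rdbl l F0 = 0) :
    ∃ F, F ∣ F0 ∧ Irreducible F ∧ 1 ≤ F.totalDegree ∧
      S.card * F.totalDegree ≤ (S.filter fun l => rdbl l F = 0).card * d := by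
  have hunit : ∀ U : MvPolynomial (Fin 3) K, U ≠ 0 → U.totalDegree = 0 → IsUnit U := by
    intro U hU h0
    rw [MvPolynomial.totalDegree_eq_zero_iff_eq_C] at h0
    rw [h0]
    apply IsUnit.map
    rw [isUnit_iff_ne_zero]
    intro h1
    rw [h1] at h0
    exact hU (by simpa using h0)
  have hex : ∃ n, ∃ F, F ∣ F0 ∧ F.totalDegree = n ∧ 1 ≤ n ∧
      S.card * F.totalDegree ≤ (S.filter fun l => rdbl l F = 0).card * d := by
    refine ⟨F0.totalDegree, F0, dvd_rfl, rfl, ?_, ?_⟩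
    · by_contra h
      have hu := hunit F0 hF0 (by omega)
      obtain ⟨l, hl⟩ := hS
      have := hu.map (rdbl l)
      rw [hS0 l hl] at this
      exact not_isUnit_zero this
    · rw [Finset.filter_true_of_mem hS0]
      exact Nat.mul_le_mul le_rfl hd
  classical
  obtain ⟨F, hdvd, hdeg, h1, hle⟩ := Nat.find_spec hex
  refine ⟨F, hdvd, ?_, by omega, hle⟩
  have hFne : F ≠ 0 := ne_zero_of_dvd_ne_zero hF0 hdvd
  constructor
  · intro hu
    obtain ⟨l, hl⟩ : (S.filter fun l => rdbl l F = 0).Nonempty := by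
      rw [Finset.nonempty_iff_ne_empty]
      intro h0
      rw [h0] at hle
      have : 0 < S.card := hS.card_pos
      rw [hdeg] at hle
      rw [Finset.card_empty, zero_mul] at hle
      exact absurd (Nat.mul_pos this h1) (by omega)
    rw [Finset.mem_filter] at hl
    have := hu.map (rdbl l)
    rw [hl.2] at this
    exact not_isUnit_zero this
  · intro U V hUV
    by_contra hcon
    push Not at hcon
    have hU0 : U ≠ 0 := by rintro rfl; simp at hUV; exact hFne hUV
    have hV0 : V ≠ 0 := by rintro rfl; simp at hUV; exact hFne hUV
    have hU1 : U.totalDegree ≠ 0 := fun h => hcon.1 (hunit U hU0 h)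
    have hV1 : V.totalDegree ≠ 0 := fun h => hcon.2 (hunit V hV0 h)
    have hsum : F.totalDegree = U.totalDegree + V.totalDegree := by
      rw [hUV, MvPolynomial.totalDegree_mul_of_isDomain hU0 hV0]
    have mU := Nat.find_min hex (m := U.totalDegree) (by omega)
    have mV := Nat.find_min hex (m := V.totalDegree) (by omega)
    have nU : ¬ S.card * U.totalDegree ≤ (S.filter fun l => rdbl l U = 0).card * d := fun h =>
      mU ⟨U, (Dvd.intro _ hUV.symm).trans hdvd, rfl, by omega, h⟩
    have nV : ¬ S.card * V.totalDegree ≤ (S.filter fun l => rdbl l V = 0).card * d := fun h =>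
      mV ⟨V, (Dvd.intro_left _ hUV.symm).trans hdvd, rfl, by omega, h⟩
    push Not at nU nV
    have c4 : (S.filter fun l => rdbl l F = 0) ⊆ (S.filter fun l => rdbl l U = 0) ∪
        (S.filter fun l => rdbl l V = 0) := by
      intro l hl
      rw [Finset.mem_filter, hUV, map_mul, mul_eq_zero] at hl
      simp only [Finset.mem_union, Finset.mem_filter]
      tauto
    have c5 := (Finset.card_le_card c4).trans (Finset.card_union_le _ _)
    rw [hsum] at hle
    nlinarith [Nat.mul_le_mul c5 (le_refl d)]
end alg4


/-- the incidence relation -/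
abbrev rdinc {p : ℕ} (P π : ZMod p × ZMod p × ZMod p) : Prop :=
  P.2.2 = π.2.1 * P.1 - π.1 * P.2.1 + π.2.2

/-- embedding of triples -/
noncomputable def rdem {p : ℕ} [Fact p.Prime] {K : Type*} [Field K] [Algebra (ZMod p) K] (v : K)
    (P : ZMod p × ZMod p × ZMod p) : K × K × K :=
  (algebraMap (ZMod p) K P.2.1 + v * algebraMap (ZMod p) K P.1, algebraMap (ZMod p) K P.2.2,
    algebraMap (ZMod p) K P.1)

section emb
variable {p : ℕ} [Fact p.Prime] {K : Type*} [Field K] [Algebra (ZMod p) K] (v : K)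

theorem rdem_inj : Function.Injective (rdem (p := p) v) := by
  intro P Q h
  have hi : Function.Injective (algebraMap (ZMod p) K) := (algebraMap (ZMod p) K).injective
  simp only [rdem, Prod.mk.injEq] at h
  obtain ⟨h1, h2, h3⟩ := h
  rw [h3] at h1
  exact Prod.ext (hi h3) (Prod.ext (hi (by simpa using h1)) (hi h2))

theorem rdem_fst (hv : v ∉ Set.range (algebraMap (ZMod p) K)) (P Q : ZMod p × ZMod p × ZMod p)
    (h : (rdem v P).1 = (rdem v Q).1) : P.1 = Q.1 ∧ P.2.1 = Q.2.1 := by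
  have hi : Function.Injective (algebraMap (ZMod p) K) := (algebraMap (ZMod p) K).injective
  simp only [rdem] at h
  by_cases ha : P.1 = Q.1
  · refine ⟨ha, hi ?_⟩
    rw [ha] at h
    simpa using h
  · exfalso
    apply hv
    refine ⟨(Q.2.1 - P.2.1) / (P.1 - Q.1), ?_⟩
    have h0 : algebraMap (ZMod p) K P.1 - algebraMap (ZMod p) K Q.1 ≠ 0 := by
      rw [sub_ne_zero]
      exact fun h => ha (hi h)
    rw [map_div₀, map_sub, map_sub, div_eq_iff h0]
    linear_combination -h

theorem rdem_meet (P π : ZMod p × ZMod p × ZMod p) :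
    ((rdem v P).2.1 - (rdem v P).2.2 * (rdem v π).1 =
      (rdem v π).2.1 - (rdem v π).2.2 * (rdem v P).1) ↔ rdinc P π := by
  have hi : Function.Injective (algebraMap (ZMod p) K) := (algebraMap (ZMod p) K).injective
  rw [rdinc, ← hi.eq_iff]
  simp only [rdem, map_add, map_sub, map_mul]
  constructor <;> intro h <;> linear_combination h
end emb

theorem rd_struct (p : ℕ) [Fact p.Prime] (R B : Finset (ZMod p × ZMod p × ZMod p)) (d k : ℕ)
    (hd : 1 ≤ d) (h6 : 6 * R.card < (d + 2) * (d + 3)) (hB : 6 * d * d ≤ B.card)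
    (hp : 2 * d + 1 < p) (hk1 : 1 ≤ k)
    (hk : ∀ π ∈ B, ∀ α β γ : ZMod p, (α ≠ 0 ∨ β ≠ 0) →
      (R.filter fun P => rdinc P π ∧ α * P.1 + β * P.2.1 = γ).card ≤ k) :
    ∃ π ∈ B, (R.filter fun P => rdinc P π).card ≤ 2 * d + k := by
  classical
  by_contra hcon
  push Not at hcon
  let K := AlgebraicClosure (ZMod p)
  have : CharP K p := charP_of_injective_algebraMap (algebraMap (ZMod p) K).injective p
  obtain ⟨v, hv⟩ : ∃ v : K, v ∉ Set.range (algebraMap (ZMod p) K) := by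
    by_contra h
    push Not at h
    have : Infinite K := IsAlgClosed.instInfinite
    have := Finite.of_surjective (algebraMap (ZMod p) K) h
    exact not_finite K
  let em := rdem (p := p) v
  have hem : Function.Injective em := rdem_inj v
  obtain ⟨F0, hF0, hF0d, hF0R⟩ := rd_exist (R.image em) d
    (lt_of_le_of_lt (Nat.mul_le_mul le_rfl Finset.card_image_le) h6)
  let N : K × K × K → Finset (K × K × K) := fun l =>
    (R.image em).filter fun r => r.2.1 - r.2.2 * l.1 = l.2.1 - l.2.2 * r.1
  have hNinj : ∀ l, Set.InjOn Prod.fst (N l : Set (K × K × K)) := by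
    intro l r hr r' hr' hrr
    simp only [N, Finset.coe_filter, Finset.mem_image, Set.mem_ofPred_eq] at hr hr'
    obtain ⟨⟨P, hP, rfl⟩, h1⟩ := hr
    obtain ⟨⟨Q, hQ, rfl⟩, h2⟩ := hr'
    have hPQ := rdem_fst v hv P Q hrr
    have h22 : (em P).2.2 = (em Q).2.2 := by
      simp only [em, rdem, hPQ.1]
    refine Prod.ext hrr (Prod.ext ?_ h22)
    have hrr' : (em P).1 = (em Q).1 := hrr
    rw [h22, hrr'] at h1
    linear_combination h1 - h2
  have hNcard : ∀ π, (N (em π)).card = (R.filter fun P => rdinc P π).card := by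
    intro π
    rw [← Finset.card_image_of_injective _ hem]
    congr 1
    ext r
    simp only [N, Finset.mem_filter, Finset.mem_image]
    constructor
    · rintro ⟨⟨P, hP, rfl⟩, h⟩
      exact ⟨P, ⟨hP, (rdem_meet v P π).1 h⟩, rfl⟩
    · rintro ⟨P, ⟨hP, h⟩, rfl⟩
      exact ⟨⟨P, hP, rfl⟩, (rdem_meet v P π).2 h⟩
  have hblue : ∀ l ∈ B.image em, rdbl l F0 = 0 := by
    intro l hl
    obtain ⟨π, hπ, rfl⟩ := Finset.mem_image.1 hl
    by_contra hne
    have h1 := rd_zeros _ d ((rdbl_deg (em π) F0).trans hF0d) (N (em π)) (hNinj _) hne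
    rw [Finset.filter_true_of_mem, hNcard] at h1
    · have := hcon π hπ
      omega
    · intro r hr
      simp only [N, Finset.mem_filter] at hr
      rw [← rd_meet _ _ hr.2, hF0R r hr.1]
      simp
  have hBcard : (B.image em).card = B.card := Finset.card_image_of_injective _ hem
  have hBne : (B.image em).Nonempty := by
    rw [← Finset.card_pos, hBcard]
    nlinarith
  obtain ⟨F, hFd, hFirr, hF1, hFle⟩ := rd_minfactor F0 hF0 d hF0d (B.image em) hBne hblue
  obtain ⟨H, hH, hHe⟩ :=
    (FiniteMultiplicity.of_not_isUnit hFirr.not_isUnit hF0).exists_eq_pow_mul_and_not_dvd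
  have hH0 : H ≠ 0 := by
    rintro rfl
    simp at hH
    exact hF0 hH
  have hdegdvd : ∀ Q, Q ∣ F0 → Q.totalDegree ≤ d := by
    rintro Q ⟨C, hC⟩
    have hQ0 : Q ≠ 0 := by rintro rfl; simp at hC; exact hF0 hC
    have hC0 : C ≠ 0 := by rintro rfl; simp at hC; exact hF0 hC
    rw [hC, MvPolynomial.totalDegree_mul_of_isDomain hQ0 hC0] at hF0d
    omega
  have hHd : H.totalDegree ≤ d := hdegdvd H (by rw [hH]; exact dvd_mul_left _ _)
  have hFdd : F.totalDegree ≤ d := hdegdvd F hFd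
  rw [hBcard] at hFle
  obtain ⟨l, hl, c, c0, M, hMN, hMk, hM⟩ := rd_core p F H hFirr _ d k hF1 hFdd hHd hHe hp
    ((B.image em).filter fun l => rdbl l F = 0) (by
      have h1 := Nat.mul_le_mul hB (le_refl F.totalDegree)
      have h2 := h1.trans hFle
      have h3 : (6 * d * F.totalDegree) * d ≤
        #((B.image em).filter fun l => rdbl l F = 0) * d := by
        calc _ = 6 * d * d * F.totalDegree := by ring
          _ ≤ _ := h2
      exact Nat.le_of_mul_le_mul_right h3 (by omega))
    (fun l hl => (Finset.mem_filter.1 hl).2) N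
    (by
      intro l _ r hr
      exact (Finset.mem_filter.1 hr).2) (fun l _ => hNinj l)
    (by
      intro l hl
      obtain ⟨π, hπ, rfl⟩ := Finset.mem_image.1 (Finset.mem_filter.1 hl).1
      rw [hNcard]
      exact hcon π hπ)
    (by
      intro l _ r hr
      rw [← hH]
      exact hF0R r (Finset.mem_filter.1 hr).1)
  obtain ⟨π, hπ, rfl⟩ := Finset.mem_image.1 (Finset.mem_filter.1 hl).1
  let M' := R.filter fun P => rdinc P π ∧ em P ∈ M
  have hM'card : M.card ≤ M'.card := by
    refine le_trans (Finset.card_le_card ?_) (Finset.card_image_le (f := em))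
    intro r hr
    have hrN := hMN hr
    simp only [N, Finset.mem_filter, Finset.mem_image] at hrN
    obtain ⟨⟨P, hP, rfl⟩, h⟩ := hrN
    exact Finset.mem_image.2 ⟨P, Finset.mem_filter.2 ⟨hP, (rdem_meet v P π).1 h, hr⟩, rfl⟩
  obtain ⟨P1, hP1, P2, hP2, hne⟩ := Finset.one_lt_card.1 (show 1 < M'.card by omega)
  have hi : Function.Injective (algebraMap (ZMod p) K) := (algebraMap (ZMod p) K).injective
  have hrel : ∀ P ∈ M', algebraMap (ZMod p) K P.1 =
      c * (algebraMap (ZMod p) K P.2.1 + v * algebraMap (ZMod p) K P.1) + c0 := by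
    intro P hP
    exact hM _ (Finset.mem_filter.1 hP).2.2
  have hcc : c ≠ 0 ∨ 1 - c * v ≠ 0 := by
    by_contra h
    push Not at h
    rw [h.1] at h
    simp at h
  have hline : ∀ P ∈ M', (P2.2.1 - P1.2.1) * P.1 + (-(P2.1 - P1.1)) * P.2.1 =
      (P2.2.1 - P1.2.1) * P1.1 + (-(P2.1 - P1.1)) * P1.2.1 := by
    intro P hP
    have e1 := hrel P hP
    have e2 := hrel P1 hP1
    have e3 := hrel P2 hP2
    apply hi
    simp only [map_add, map_mul, map_sub, map_neg]
    rcases hcc with h | h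
    · apply mul_left_cancel₀ h
      linear_combination
        (algebraMap (ZMod p) K P2.1 - algebraMap (ZMod p) K P1.1) * (e1 - e2)
        - (algebraMap (ZMod p) K P.1 - algebraMap (ZMod p) K P1.1) * (e3 - e2)
    · apply mul_left_cancel₀ h
      linear_combination
        (algebraMap (ZMod p) K P2.2.1 - algebraMap (ZMod p) K P1.2.1) * (e1 - e2)
        - (algebraMap (ZMod p) K P.2.1 - algebraMap (ZMod p) K P1.2.1) * (e3 - e2)
  have hfin := hk π hπ (P2.2.1 - P1.2.1) (-(P2.1 - P1.1))
    ((P2.2.1 - P1.2.1) * P1.1 + (-(P2.1 - P1.1)) * P1.2.1) (by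
    by_contra h
    push Not at h
    obtain ⟨h1, h2⟩ := h
    have g1 : P2.2.1 = P1.2.1 := sub_eq_zero.1 h1
    have g2 : P2.1 = P1.1 := sub_eq_zero.1 (neg_eq_zero.1 h2)
    apply hne
    have i1 := (Finset.mem_filter.1 hP1).2.1
    have i2 := (Finset.mem_filter.1 hP2).2.1
    refine Prod.ext g2.symm (Prod.ext g1.symm ?_)
    rw [rdinc] at i1 i2
    rw [i1, i2, g1, g2])
  have hsub : M' ⊆ R.filter fun P => rdinc P π ∧ (P2.2.1 - P1.2.1) * P.1 +
      (-(P2.1 - P1.1)) * P.2.1 = (P2.2.1 - P1.2.1) * P1.1 + (-(P2.1 - P1.1)) * P1.2.1 := by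
    intro P hP
    have := (Finset.mem_filter.1 hP)
    exact Finset.mem_filter.2 ⟨this.1, this.2.1, hline P hP⟩
  have := Finset.card_le_card hsub
  omega


/-- number of incidences -/
def rdI {p : ℕ} (R B : Finset (ZMod p × ZMod p × ZMod p)) : ℕ :=
  ∑ π ∈ B, (R.filter fun P => rdinc P π).card

theorem rdI_swap {p : ℕ} (R B : Finset (ZMod p × ZMod p × ZMod p)) :
    rdI R B = ∑ P ∈ R, (B.filter fun π => rdinc P π).card := by
  unfold rdI
  simp only [Finset.card_filter]
  exact Finset.sum_comm

theorem rd_piece {α : Type*} [DecidableEq α] (f : α → ℕ) (m : ℕ) : ∀ (g : ℕ) (R : Finset α),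
    R.card ≤ g * m → ∃ R' ⊆ R, R'.card ≤ m ∧ ∑ x ∈ R, f x ≤ g * ∑ x ∈ R', f x := by
  intro g
  induction g with
  | zero =>
    intro R hR
    have : R = ∅ := by
      rw [← Finset.card_eq_zero]; omega
    subst this
    exact ⟨∅, by simp, by simp, by simp⟩
  | succ g ih =>
    intro R hR
    by_cases hm : R.card ≤ m
    · refine ⟨R, subset_rfl, hm, ?_⟩
      nlinarith [Nat.zero_le (∑ x ∈ R, f x)]
    push Not at hm
    obtain ⟨R1, h1, hc1⟩ := Finset.exists_subset_card_eq hm.le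
    have hsum := Finset.sum_sdiff h1 (f := f)
    have hcard := Finset.card_sdiff_add_card_eq_card h1
    obtain ⟨R2, h2, hc2, hs2⟩ := ih (R \ R1) (by
      have : (g + 1) * m = g * m + m := by ring
      omega)
    by_cases hcase : ∑ x ∈ R2, f x ≤ ∑ x ∈ R1, f x
    · refine ⟨R1, h1, hc1.le, ?_⟩
      nlinarith [Nat.mul_le_mul (le_refl g) hcase]
    · push Not at hcase
      refine ⟨R2, h2.trans Finset.sdiff_subset, hc2, ?_⟩
      nlinarith

theorem rd_inc_exp : ∃ g : ℕ, 10 ^ 12 ≤ g ∧ (g : ℝ) ^ ((1 : ℝ) / 1000) = 10 ^ 6 := by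
  obtain ⟨n, hn⟩ : ∃ n : ℕ, n = 1000 := ⟨_, rfl⟩
  refine ⟨(10 ^ 6) ^ n, ?_, ?_⟩
  · calc 10 ^ 12 = (10 ^ 6) ^ 2 := by norm_num
      _ ≤ (10 ^ 6) ^ n := Nat.pow_le_pow_right (by norm_num) (by omega)
  · have : (1 : ℝ) / 1000 = ((n : ℝ))⁻¹ := by rw [hn]; norm_num
    rw [this]
    push_cast
    rw [Real.pow_rpow_inv_natCast (by positivity) (by omega)]
    norm_num

theorem rd_rpow32 (M : ℝ) (hM : 0 ≤ M) : M ^ ((3 : ℝ) / 2) = M * √M := by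
  rw [show (3 : ℝ) / 2 = 1 + 1 / 2 by norm_num, Real.rpow_add_of_nonneg hM (by norm_num) (by norm_num),
    Real.rpow_one, Real.sqrt_eq_rpow]

theorem rd_rpow1d (M : ℝ) (hM : 0 ≤ M) :
    M ^ (1 + (1 : ℝ) / 1000) = M * M ^ ((1 : ℝ) / 1000) := by
  rw [Real.rpow_add_of_nonneg hM (by norm_num) (by norm_num), Real.rpow_one]

theorem rdI_triv {p : ℕ} (R B : Finset (ZMod p × ZMod p × ZMod p)) :
    rdI R B ≤ B.card * R.card := by
  unfold rdI
  refine (Finset.sum_le_card_nsmul _ _ R.card (fun π _ => Finset.card_filter_le _ _)).trans ?_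
  simp

theorem rd_base (g M : ℝ) (hg : 10 ^ 12 ≤ g) (hM0 : 0 ≤ M) (hMg : M < g) (k : ℕ) :
    M * M ≤ 28 * g * (M ^ ((3 : ℝ) / 2) + k * M ^ (1 + (1 : ℝ) / 1000)) := by
  rw [rd_rpow32 M hM0]
  have h1 : √M ≤ g := by
    rw [Real.sqrt_le_iff]
    constructor
    · linarith
    · nlinarith
  have h2 := Real.mul_self_sqrt hM0
  have h3 : 0 ≤ (k : ℝ) * M ^ (1 + (1 : ℝ) / 1000) := by positivity
  have h4 : 0 ≤ √M := Real.sqrt_nonneg M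
  have h5 : M * M = (M * √M) * √M := by rw [mul_assoc, h2]
  have h6 : 0 ≤ M * √M := by positivity
  rw [h5]
  nlinarith [mul_le_mul_of_nonneg_left h1 h6, mul_nonneg (show 0 ≤ g by linarith) h3,
    mul_nonneg (show 0 ≤ g by linarith) h6]

theorem rd_numeric (g M : ℝ) (hg : 10 ^ 12 ≤ g) (hgd : g ^ ((1 : ℝ) / 1000) = 10 ^ 6)
    (hMg : g ≤ M) :
    g * (288 * M / g) ^ ((3 : ℝ) / 2) ≤ M * √M / 2 ∧
    g * (288 * M / g) ^ (1 + (1 : ℝ) / 1000) ≤ M * M ^ ((1 : ℝ) / 1000) / 2 := by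
  have hg0 : 0 < g := by linarith [show (0 : ℝ) < 10 ^ 12 by positivity]
  have hM0 : 0 < M := by linarith
  have h0 : 0 ≤ 288 * M / g := by positivity
  constructor
  · rw [rd_rpow32 _ h0]
    have h1 : √(288 * M / g) ≤ √M / 1000 := by
      rw [Real.sqrt_le_iff]
      refine ⟨by positivity, ?_⟩
      rw [div_pow, Real.sq_sqrt hM0.le, div_le_div_iff₀ hg0 (by norm_num)]
      nlinarith
    have h2 : g * (288 * M / g * √(288 * M / g)) = 288 * M * √(288 * M / g) := by
      field_simp
    rw [h2]
    have h3 : 0 ≤ M * √M := by positivity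
    nlinarith [mul_le_mul_of_nonneg_left h1 (show 0 ≤ 288 * M by positivity)]
  · rw [rd_rpow1d _ h0]
    have h1 : (288 * M / g) ^ ((1 : ℝ) / 1000) ≤ 288 * M ^ ((1 : ℝ) / 1000) / 10 ^ 6 := by
      rw [Real.div_rpow (by positivity) hg0.le, hgd, Real.mul_rpow (by norm_num) hM0.le]
      gcongr
      calc (288 : ℝ) ^ ((1 : ℝ) / 1000) ≤ 288 ^ (1 : ℝ) :=
            Real.rpow_le_rpow_of_exponent_le (by norm_num) (by norm_num)
        _ = 288 := Real.rpow_one _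
    have h2 : g * (288 * M / g * (288 * M / g) ^ ((1 : ℝ) / 1000)) =
        288 * M * (288 * M / g) ^ ((1 : ℝ) / 1000) := by
      field_simp
    rw [h2]
    have h3 : 0 ≤ M * M ^ ((1 : ℝ) / 1000) := by positivity
    nlinarith [mul_le_mul_of_nonneg_left h1 (show 0 ≤ 288 * M by positivity)]

theorem rd_dchoice (g M p : ℝ) (hg : 10 ^ 12 ≤ g) (hMg : g ≤ M) (hp : 0 ≤ p)
    (hMp : M ≤ p ^ 2 / 1000) : ∃ d : ℕ, 1 ≤ d ∧ 12 * M / g ≤ (d : ℝ) * d ∧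
      6 * (d : ℝ) * d ≤ 288 * M / g ∧ 2 * (d : ℝ) ≤ 4 * √M ∧ 2 * (d : ℝ) + 1 < p := by
  have hg0 : 0 < g := by linarith [show (0 : ℝ) < 10 ^ 12 by positivity]
  have hM0 : 0 < M := by linarith
  obtain ⟨x, hx⟩ : ∃ x, x = M / g := ⟨_, rfl⟩
  have hx1 : 1 ≤ x := by rw [hx, le_div_iff₀ hg0]; linarith
  have e1 : 12 * M / g = 12 * x := by rw [hx]; ring
  have e2 : 288 * M / g = 288 * x := by rw [hx]; ring
  have hxg : x * g = M := by rw [hx]; field_simp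
  have hr0 : 0 ≤ √(12 * x) := Real.sqrt_nonneg _
  have hr2 := Real.mul_self_sqrt (show 0 ≤ 12 * x by linarith)
  set r := √(12 * x) with hr
  have hr3 : 3 ≤ r := by nlinarith
  have hd1 := Nat.le_ceil r
  have hd2 := Nat.ceil_lt_add_one hr0
  have hrM : r ≤ √M := by
    apply Real.sqrt_le_sqrt
    nlinarith
  have hp2 : (100 : ℝ) ≤ p := by
    by_contra h
    push Not at h
    nlinarith
  have hrp : r ≤ p / 100 := by
    rw [hr, Real.sqrt_le_iff]
    refine ⟨by positivity, ?_⟩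
    nlinarith
  refine ⟨⌈r⌉₊, ?_, ?_, ?_, ?_, ?_⟩
  · rw [Nat.one_le_ceil_iff]; linarith
  · rw [e1]; nlinarith
  · rw [e2]; nlinarith
  · linarith
  · linarith

theorem rd_inc_bound : ∃ C : ℝ, 1 ≤ C ∧ ∀ (p : ℕ) [Fact p.Prime]
    (R B : Finset (ZMod p × ZMod p × ZMod p)) (M : ℝ) (k : ℕ), (R.card : ℝ) ≤ M →
    (B.card : ℝ) ≤ M → M ≤ (p : ℝ) ^ 2 / 1000 → 1 ≤ k →
    (∀ π ∈ B, ∀ α β γ : ZMod p, (α ≠ 0 ∨ β ≠ 0) →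
      (R.filter fun P => rdinc P π ∧ α * P.1 + β * P.2.1 = γ).card ≤ k) →
    (rdI R B : ℝ) ≤ C * (M ^ ((3 : ℝ) / 2) + k * M ^ (1 + (1 : ℝ) / 1000)) := by
  obtain ⟨g, hg, hgd⟩ := rd_inc_exp
  have hgR : (10 : ℝ) ^ 12 ≤ g := by exact_mod_cast hg
  have hg0 : (0 : ℝ) < g := by linarith [show (0 : ℝ) < 10 ^ 12 by positivity]
  refine ⟨28 * g, by linarith [show (1 : ℝ) < 10 ^ 12 by norm_num], ?_⟩
  intro p _ R B M k hR hB hMp hk1 hk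
  have hsmall : ∀ (R B : Finset (ZMod p × ZMod p × ZMod p)) (M : ℝ), (R.card : ℝ) ≤ M →
      (B.card : ℝ) ≤ M → M < g →
      (rdI R B : ℝ) ≤ 28 * g * (M ^ ((3 : ℝ) / 2) + k * M ^ (1 + (1 : ℝ) / 1000)) := by
    intro R B M hR hB hMg
    have hM0 : 0 ≤ M := le_trans (by positivity) hR
    refine le_trans ?_ (rd_base g M hgR hM0 hMg k)
    calc (rdI R B : ℝ) ≤ B.card * R.card := by exact_mod_cast rdI_triv R B
      _ ≤ M * M := by gcongr
  obtain ⟨j, hj⟩ := pow_unbounded_of_one_lt M (one_lt_two)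
  induction j generalizing R B M with
  | zero =>
    refine hsmall R B M hR hB ?_
    simp at hj
    linarith [show (1 : ℝ) < 10 ^ 12 by norm_num]
  | succ j ih =>
    have hM0 : 0 ≤ M := le_trans (by positivity) hR
    by_cases hMg : M < g
    · exact hsmall R B M hR hB hMg
    push Not at hMg
    obtain ⟨d, hd1, hd12, hd6, hdM, hdp⟩ := rd_dchoice g M p hgR hMg (by positivity) hMp
    have hMgx : 1 ≤ M / g := by rw [le_div_iff₀ hg0]; linarith
    obtain ⟨R', hR'R, hR'c, hR's⟩ := rd_piece (fun P => (B.filter fun π => rdinc P π).card)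
      ⌈M / g⌉₊ g R (by
        have h1 : (R.card : ℝ) ≤ g * ⌈M / g⌉₊ := by
          have := Nat.le_ceil (M / g)
          calc (R.card : ℝ) ≤ M := hR
            _ = g * (M / g) := by field_simp
            _ ≤ _ := by gcongr
        exact_mod_cast h1)
    rw [← rdI_swap, ← rdI_swap] at hR's
    have hR'2 : (R'.card : ℝ) ≤ 2 * (M / g) := by
      have h1 : (R'.card : ℝ) ≤ (⌈M / g⌉₊ : ℝ) := by exact_mod_cast hR'c
      have h2 := Nat.ceil_lt_add_one (show 0 ≤ M / g by linarith)
      linarith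
    let B' := B.filter fun π => 2 * d + k < (R'.filter fun P => rdinc P π).card
    have hB'B : B' ⊆ B := Finset.filter_subset _ _
    have hk' : ∀ π ∈ B', ∀ α β γ : ZMod p, (α ≠ 0 ∨ β ≠ 0) →
        (R'.filter fun P => rdinc P π ∧ α * P.1 + β * P.2.1 = γ).card ≤ k := by
      intro π hπ α β γ h
      exact (Finset.card_le_card (Finset.filter_subset_filter _ hR'R)).trans
        (hk π (hB'B hπ) α β γ h)
    have hB'card : B'.card < 6 * d * d := by
      by_contra hcon
      push Not at hcon
      obtain ⟨π, hπ, hle⟩ := rd_struct p R' B' d k hd1 (by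
        have : (6 * R'.card : ℝ) < (d + 2) * (d + 3) := by
          have : 12 * M / g = 6 * (2 * (M / g)) := by ring
          nlinarith
        exact_mod_cast this) hcon (by exact_mod_cast hdp) hk1 hk'
      have := (Finset.mem_filter.1 hπ).2
      omega
    have hB'R : (B'.card : ℝ) ≤ 288 * M / g := by
      refine le_trans ?_ hd6
      exact_mod_cast hB'card.le
    have hM1 : 288 * M / g ≤ M / 2 := by
      rw [div_le_div_iff₀ hg0 (by norm_num)]
      nlinarith
    have hIH := ih R' B' (288 * M / g) (by
        refine hR'2.trans ?_
        have : 288 * M / g = 288 * (M / g) := by ring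
        linarith) hB'R (by linarith) hk' (by
        rw [pow_succ] at hj
        linarith)
    have hsplit : rdI R' B ≤ rdI R' B' + (2 * d + k) * B.card := by
      unfold rdI
      rw [← Finset.sum_filter_add_sum_filter_not B
        (fun π => 2 * d + k < (R'.filter fun P => rdinc P π).card)]
      refine Nat.add_le_add le_rfl ?_
      refine (Finset.sum_le_card_nsmul _ _ (2 * d + k) ?_).trans ?_
      · intro π hπ
        have := (Finset.mem_filter.1 hπ).2
        omega
      · rw [smul_eq_mul, mul_comm]
        exact Nat.mul_le_mul le_rfl (Finset.card_filter_le _ _)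
    obtain ⟨hn1, hn2⟩ := rd_numeric g M hgR hgd hMg
    rw [rd_rpow32 M hM0, rd_rpow1d M hM0]
    have hMd : 1 ≤ M ^ ((1 : ℝ) / 1000) := by
      apply Real.one_le_rpow
      · linarith [show (1 : ℝ) < 10 ^ 12 by norm_num]
      · norm_num
    have hfin : (rdI R B : ℝ) ≤ g * (rdI R' B' + (2 * d + k) * M) := by
      calc (rdI R B : ℝ) ≤ g * rdI R' B := by exact_mod_cast hR's
        _ ≤ g * (rdI R' B' + (2 * d + k) * B.card) := by
          gcongr
          exact_mod_cast hsplit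
        _ ≤ _ := by gcongr
    have hk0 : (0 : ℝ) ≤ k := by positivity
    set X := (288 * M / g) ^ ((3 : ℝ) / 2)
    set Y := (288 * M / g) ^ (1 + (1 : ℝ) / 1000)
    set δM := M ^ ((1 : ℝ) / 1000)
    have s1 : g * (rdI R' B' : ℝ) ≤ 28 * g * (M * √M / 2 + k * (M * δM / 2)) := by
      calc g * (rdI R' B' : ℝ) ≤ g * (28 * g * (X + k * Y)) := by gcongr
        _ = 28 * g * (g * X + k * (g * Y)) := by ring
        _ ≤ _ := by gcongr
    have s2 : g * ((2 * d + k) * M) ≤ g * (4 * (M * √M) + k * (M * δM)) := by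
      have : k * M ≤ k * (M * δM) := by
        apply mul_le_mul_of_nonneg_left _ hk0
        nlinarith
      have h3 := mul_le_mul_of_nonneg_right hdM hM0
      apply mul_le_mul_of_nonneg_left _ hg0.le
      nlinarith
    have s3 : 0 ≤ g * (M * √M) := by positivity
    have s4 : 0 ≤ g * (k * (M * δM)) := by positivity
    nlinarith


theorem rd_fib {α β : Type*} [DecidableEq α] [DecidableEq β] (S : Finset α) (f : α → β)
    (Tg : Finset β) (hf : ∀ x ∈ S, f x ∈ Tg) :
    ∑ t ∈ Tg, ((S.filter fun x => f x = t).card) ^ 2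
      = ((S ×ˢ S).filter fun z => f z.1 = f z.2).card := by
  rw [Finset.card_eq_sum_card_fiberwise (f := fun z : α × α => f z.1) (t := Tg)]
  · refine Finset.sum_congr rfl fun t _ => ?_
    rw [sq, ← Finset.card_product]
    congr 1
    ext z
    simp only [Finset.mem_product, Finset.mem_filter]
    constructor
    · rintro ⟨⟨h1, h2⟩, h3, h4⟩
      exact ⟨⟨⟨h1, h3⟩, h2.trans h4.symm⟩, h2⟩
    · rintro ⟨⟨⟨h1, h3⟩, h2⟩, h4⟩
      exact ⟨⟨h1, h4⟩, h3, h2 ▸ h4⟩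
  · intro z hz
    have hz' := (Finset.mem_filter.1 (Finset.mem_coe.1 hz)).1
    exact hf _ (Finset.mem_product.1 hz').1

theorem rd_cs {α β : Type*} [DecidableEq α] [DecidableEq β] (S : Finset α) (f : α → β)
    (Tg : Finset β) (hf : ∀ x ∈ S, f x ∈ Tg) :
    S.card ^ 2 ≤ Tg.card * ((S ×ˢ S).filter fun z => f z.1 = f z.2).card := by
  rw [← rd_fib S f Tg hf, Finset.card_eq_sum_card_fiberwise (f := f) (t := Tg) hf]
  exact sq_sum_le_card_mul_sum_sq

section rdabs
variable {F ι : Type*} [Field F] [Fintype F] [DecidableEq F] [DecidableEq ι]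

def rdP (X : Finset ι) (d : ι → F) (s : F) : Finset (ι × ι) :=
  (X ×ˢ X).filter fun z => d z.1 = s * d z.2

theorem rdP_mem (X : Finset ι) (d : ι → F) (s : F) (z : ι × ι) :
    z ∈ rdP X d s ↔ (z.1 ∈ X ∧ z.2 ∈ X) ∧ d z.1 = s * d z.2 := by
  simp [rdP]

theorem rdP_div (X : Finset ι) (d : ι → F) (hd : ∀ u ∈ X, d u ≠ 0) (s : F) :
    rdP X d s = (X ×ˢ X).filter fun z => d z.1 / d z.2 = s := by
  ext z
  simp only [rdP, Finset.mem_filter, Finset.mem_product]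
  refine and_congr_right fun h => ?_
  rw [div_eq_iff (hd _ h.2)]

theorem rd_E2eq (X : Finset ι) (d : ι → F) (hd : ∀ u ∈ X, d u ≠ 0) :
    ∑ s, (rdP X d s).card ^ 2 = (((X ×ˢ X) ×ˢ (X ×ˢ X)).filter fun z =>
      d z.1.1 * d z.2.2 = d z.2.1 * d z.1.2).card := by
  simp_rw [rdP_div X d hd]
  rw [rd_fib (X ×ˢ X) (fun z => d z.1 / d z.2) Finset.univ (fun _ _ => Finset.mem_univ _)]
  congr 1
  refine Finset.filter_congr fun z hz => ?_
  simp only [Finset.mem_product] at hz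
  rw [div_eq_div_iff (hd _ hz.1.2) (hd _ hz.2.2)]

theorem rd_E2low (X : Finset ι) (d : ι → F) (hd : ∀ u ∈ X, d u ≠ 0) (G : Finset F)
    (hG : ∀ u ∈ X, ∀ v ∈ X, d u * d v ∈ G) :
    X.card ^ 4 ≤ G.card * ∑ s, (rdP X d s).card ^ 2 := by
  rw [rd_E2eq X d hd]
  have h := rd_cs (X ×ˢ X) (fun z => d z.1 * d z.2) G (fun z hz => by
    rw [Finset.mem_product] at hz
    exact hG _ hz.1 _ hz.2)
  rw [Finset.card_product] at h
  have e : X.card ^ 4 = (X.card * X.card) ^ 2 := by ring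
  rw [e]
  refine h.trans (Nat.mul_le_mul le_rfl ?_)
  refine Finset.card_le_card_of_injOn (fun z => ((z.1.1, z.2.2), (z.2.1, z.1.2))) ?_ ?_
  · intro z hz
    simp only [Finset.coe_filter, Finset.mem_product, Set.mem_setOf_eq] at hz ⊢
    obtain ⟨⟨⟨a, b⟩, c, e⟩, h⟩ := hz
    exact ⟨⟨⟨a, e⟩, c, b⟩, h⟩
  · rintro ⟨⟨a, b⟩, c, e⟩ _ ⟨⟨a', b'⟩, c', e'⟩ _ h
    simp only [Prod.mk.injEq] at h ⊢
    tauto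

/-- representation count in `G` -/
def rdr (G : Finset F) (q : F) : Finset (F × F) :=
  (G ×ˢ G).filter fun z => z.1 = q * z.2

def rdEq (X : Finset ι) (d : ι → F) (q : F) : Finset ((ι × ι × ι) × (ι × ι × ι)) :=
  ((X ×ˢ rdP X d q) ×ˢ (X ×ˢ rdP X d q)).filter fun z =>
    d z.1.1 * d z.1.2.2 = d z.2.1 * d z.2.2.2

theorem rd_KK (X : Finset ι) (d : ι → F) (G : Finset F)
    (hG : ∀ u ∈ X, ∀ v ∈ X, d u * d v ∈ G) (q : F) :
    (X.card * (rdP X d q).card) ^ 2 ≤ (rdr G q).card * (rdEq X d q).card := by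
  have h := rd_cs (X ×ˢ rdP X d q) (fun z => ((d z.1 * d z.2.1, d z.1 * d z.2.2) : F × F))
    (rdr G q) (fun z hz => by
      rw [Finset.mem_product, rdP_mem] at hz
      obtain ⟨h1, ⟨h2, h3⟩, h4⟩ := hz
      simp only [rdr, Finset.mem_filter, Finset.mem_product]
      refine ⟨⟨hG _ h1 _ h2, hG _ h1 _ h3⟩, ?_⟩
      rw [h4]; ring)
  rw [Finset.card_product] at h
  refine h.trans (Nat.mul_le_mul le_rfl ?_)
  refine Finset.card_le_card ?_
  intro z hz
  simp only [rdEq, Finset.mem_filter, Prod.mk.injEq] at hz ⊢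
  exact ⟨hz.1, hz.2.2⟩

theorem rd_sumEq (X : Finset ι) (d : ι → F) (hd : ∀ u ∈ X, d u ≠ 0) :
    ∑ q, (rdEq X d q).card ≤ ∑ s, (rdP X d s).card ^ 3 := by
  have e : ∑ s, (rdP X d s).card ^ 3
      = (Finset.univ.sigma fun s : F => rdP X d s ×ˢ rdP X d s ×ˢ rdP X d s).card := by
    rw [Finset.card_sigma]
    refine Finset.sum_congr rfl fun s _ => ?_
    rw [Finset.card_product, Finset.card_product]; ring
  rw [e, ← Finset.card_sigma]
  refine Finset.card_le_card_of_injOn (fun z => ⟨d z.2.1.1 / d z.2.2.1,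
    ((z.2.1.1, z.2.2.1), ((z.2.2.2.2, z.2.1.2.2), (z.2.2.2.1, z.2.1.2.1)))⟩) ?_ ?_
  · rintro ⟨q, ⟨w, u, v⟩, w', u', v'⟩ hz
    simp only [Finset.coe_sigma, Set.mem_sigma_iff, Finset.mem_coe, Finset.mem_univ, true_and,
      rdEq, Finset.mem_filter, Finset.mem_product, rdP_mem] at hz ⊢
    obtain ⟨⟨⟨hw, ⟨hu, hv⟩, h1⟩, hw', ⟨hu', hv'⟩, h2⟩, h3⟩ := hz
    have n1 := hd _ hw'
    refine ⟨⟨⟨hw, hw'⟩, ?_⟩, ⟨⟨hv', hv⟩, ?_⟩, ⟨hu', hu⟩, ?_⟩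
    · field_simp
    · field_simp; linear_combination -h3
    · field_simp
      rw [h1, h2]; linear_combination -q * h3
  · rintro ⟨q, ⟨w, u, v⟩, w', u', v'⟩ hz ⟨q2, ⟨w2, u2, v2⟩, w2', u2', v2'⟩ hz2 h
    simp only [Finset.coe_sigma, Set.mem_sigma_iff, Finset.mem_coe, Finset.mem_univ, true_and,
      rdEq, Finset.mem_filter, Finset.mem_product, rdP_mem] at hz hz2
    simp only [Sigma.mk.injEq, heq_eq_eq, Prod.mk.injEq] at h
    obtain ⟨_, ⟨rfl, rfl⟩, ⟨rfl, rfl⟩, rfl, rfl⟩ := h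
    have a := hz.1.1.2.2
    have b := hz2.1.1.2.2
    have n := hd _ hz.1.1.2.1.2
    have : q = q2 := mul_right_cancel₀ n (a.symm.trans b)
    subst this
    rfl

theorem rd_alg (T E2 E3 H K W : ℝ) (hE20 : 0 ≤ E2) (hE30 : 0 ≤ E3)
    (h1 : E2 ^ 2 ≤ H * K) (h2 : K ^ 2 ≤ E2 * E3) (h3 : (T * H) ^ 2 ≤ W * E3) :
    T ^ 2 * E2 ^ 3 ≤ W * E3 ^ 2 := by
  have h4 : E2 ^ 3 ≤ H ^ 2 * E3 := by
    rcases hE20.eq_or_lt with h0 | h0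
    · rw [← h0]
      have : 0 ≤ H ^ 2 * E3 := mul_nonneg (sq_nonneg _) hE30
      simpa using this
    · have : E2 ^ 4 ≤ H ^ 2 * (E2 * E3) := by
        calc E2 ^ 4 = (E2 ^ 2) ^ 2 := by ring
          _ ≤ (H * K) ^ 2 := pow_le_pow_left₀ (sq_nonneg _) h1 2
          _ = H ^ 2 * K ^ 2 := by ring
          _ ≤ _ := mul_le_mul_of_nonneg_left h2 (sq_nonneg _)
      refine le_of_mul_le_mul_left (a := E2) ?_ h0
      calc E2 * E2 ^ 3 = E2 ^ 4 := by ring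
        _ ≤ _ := this
        _ = _ := by ring
  calc T ^ 2 * E2 ^ 3 ≤ T ^ 2 * (H ^ 2 * E3) :=
        mul_le_mul_of_nonneg_left h4 (sq_nonneg _)
    _ = (T * H) ^ 2 * E3 := by ring
    _ ≤ (W * E3) * E3 := mul_le_mul_of_nonneg_right h3 hE30
    _ = _ := by ring

theorem rd_holder_real {κ : Type*} (S : Finset κ) (T : ℝ) (hT : 0 ≤ T) (ρ r e : κ → ℝ)
    (hρ0 : ∀ s, 0 ≤ ρ s) (hr0 : ∀ s, 0 ≤ r s) (he0 : ∀ s, 0 ≤ e s)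
    (hk : ∀ s, (T * ρ s) ^ 2 ≤ r s * e s) (hb : ∑ s ∈ S, e s ≤ ∑ s ∈ S, ρ s ^ 3) :
    T ^ 2 * (∑ s ∈ S, ρ s ^ 2) ^ 3 ≤ (∑ s ∈ S, ρ s * r s) * (∑ s ∈ S, ρ s ^ 3) ^ 2 := by
  have hss : ∀ s, √(ρ s) * √(ρ s) = ρ s := fun s => Real.mul_self_sqrt (hρ0 s)
  refine rd_alg T _ _ (∑ s ∈ S, ρ s * √(ρ s)) (∑ s ∈ S, ρ s ^ 2 * √(ρ s)) _
    (Finset.sum_nonneg fun s _ => pow_nonneg (hρ0 s) _)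
    (Finset.sum_nonneg fun s _ => pow_nonneg (hρ0 s) _) ?_ ?_ ?_
  · refine Finset.sum_sq_le_sum_mul_sum_of_sq_le_mul _
      (fun s _ => mul_nonneg (hρ0 s) (Real.sqrt_nonneg _))
      (fun s _ => mul_nonneg (pow_nonneg (hρ0 s) _) (Real.sqrt_nonneg _)) (fun s _ => le_of_eq ?_)
    linear_combination -(ρ s) ^ 3 * hss s
  · refine Finset.sum_sq_le_sum_mul_sum_of_sq_le_mul _ (fun s _ => pow_nonneg (hρ0 s) _)
      (fun s _ => pow_nonneg (hρ0 s) _) (fun s _ => le_of_eq ?_)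
    linear_combination (ρ s) ^ 4 * hss s
  · have hW0 : 0 ≤ ∑ s ∈ S, ρ s * r s := Finset.sum_nonneg fun s _ => mul_nonneg (hρ0 s) (hr0 s)
    refine le_trans ?_ (mul_le_mul_of_nonneg_left hb hW0)
    rw [Finset.mul_sum]
    refine Finset.sum_sq_le_sum_mul_sum_of_sq_le_mul _
      (fun s _ => mul_nonneg (hρ0 s) (hr0 s)) (fun s _ => he0 s) (fun q _ => ?_)
    calc (T * (ρ q * √(ρ q))) ^ 2 = (T * ρ q) ^ 2 * ρ q := by
            linear_combination T ^ 2 * ρ q ^ 2 * hss q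
      _ ≤ (r q * e q) * ρ q := mul_le_mul_of_nonneg_right (hk q) (hρ0 q)
      _ = _ := by ring

theorem rd_holder (X : Finset ι) (d : ι → F) (hd : ∀ u ∈ X, d u ≠ 0) (G : Finset F)
    (hG : ∀ u ∈ X, ∀ v ∈ X, d u * d v ∈ G) :
    (X.card : ℝ) ^ 2 * (∑ s, ((rdP X d s).card : ℝ) ^ 2) ^ 3 ≤
      (∑ q, ((rdP X d q).card : ℝ) * (rdr G q).card) * (∑ s, ((rdP X d s).card : ℝ) ^ 3) ^ 2 := by
  refine rd_holder_real Finset.univ _ (Nat.cast_nonneg _) _ _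
    (fun q => ((rdEq X d q).card : ℝ)) (fun _ => Nat.cast_nonneg _)
    (fun _ => Nat.cast_nonneg _) (fun _ => Nat.cast_nonneg _) (fun q => ?_) ?_
  · exact_mod_cast rd_KK X d G hG q
  · exact_mod_cast rd_sumEq X d hd

end rdabs


def rdHyp (C : ℝ) : Prop := ∀ (p : ℕ) [Fact p.Prime]
    (R B : Finset (ZMod p × ZMod p × ZMod p)) (M : ℝ) (k : ℕ), (R.card : ℝ) ≤ M →
    (B.card : ℝ) ≤ M → M ≤ (p : ℝ) ^ 2 / 1000 → 1 ≤ k →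
    (∀ π ∈ B, ∀ α β γ : ZMod p, (α ≠ 0 ∨ β ≠ 0) →
      (R.filter fun P => rdinc P π ∧ α * P.1 + β * P.2.1 = γ).card ≤ k) →
    (rdI R B : ℝ) ≤ C * (M ^ ((3 : ℝ) / 2) + k * M ^ (1 + (1 : ℝ) / 1000))

theorem rdI_card {p : ℕ} (R B : Finset (ZMod p × ZMod p × ZMod p)) :
    rdI R B = ((B ×ˢ R).filter fun z => rdinc z.2 z.1).card := by
  unfold rdI
  rw [Finset.card_filter, Finset.sum_product]
  refine Finset.sum_congr rfl fun π _ => ?_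
  rw [Finset.card_filter]

theorem rd_Y (C : ℝ) (hC : rdHyp C) (p : ℕ) [Fact p.Prime] (A Y Y' : Finset (ZMod p)) (L : ℕ)
    (hY0 : ∀ y ∈ Y, y ≠ 0) (hY0' : ∀ y ∈ Y', y ≠ 0) (hY : Y.card ≤ L) (hY' : Y'.card ≤ L)
    (hL : 1 ≤ L) (hM : (A.card : ℝ) ^ 2 * L ≤ (p : ℝ) ^ 2 / 1000) :
    ((((A ×ˢ Y ×ˢ A) ×ˢ (A ×ˢ Y' ×ˢ A)).filter fun z =>
      (z.1.1 - z.2.2.2) * z.2.2.1 = (z.2.1 - z.1.2.2) * z.1.2.1).card : ℝ) ≤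
      C * (((A.card : ℝ) ^ 2 * L) ^ ((3 : ℝ) / 2)
        + (max A.card L : ℕ) * ((A.card : ℝ) ^ 2 * L) ^ (1 + (1 : ℝ) / 1000)) := by
  set R := (A ×ˢ Y ×ˢ A).image fun u => ((u.1, u.2.1, u.2.2 * u.2.1) : ZMod p × ZMod p × ZMod p)
    with hR
  set B := (A ×ˢ Y' ×ˢ A).image fun u => ((-u.1, -u.2.1, u.2.2 * u.2.1) : ZMod p × ZMod p × ZMod p)
    with hB
  have hRc : (R.card : ℝ) ≤ (A.card : ℝ) ^ 2 * L := by
    have h1 : R.card ≤ A.card * (L * A.card) := by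
      refine Finset.card_image_le.trans ?_
      rw [Finset.card_product, Finset.card_product]
      gcongr
    have h2 : (R.card : ℝ) ≤ A.card * (L * A.card) := by exact_mod_cast h1
    linarith [h2, show (A.card : ℝ) * (L * A.card) = (A.card : ℝ) ^ 2 * L by ring]
  have hBc : (B.card : ℝ) ≤ (A.card : ℝ) ^ 2 * L := by
    have h1 : B.card ≤ A.card * (L * A.card) := by
      refine Finset.card_image_le.trans ?_
      rw [Finset.card_product, Finset.card_product]
      gcongr
    have h2 : (B.card : ℝ) ≤ A.card * (L * A.card) := by exact_mod_cast h1
    linarith [h2, show (A.card : ℝ) * (L * A.card) = (A.card : ℝ) ^ 2 * L by ring]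
  have hRm : ∀ P ∈ R, P.1 ∈ A ∧ P.2.1 ∈ Y := by
    intro P hP
    obtain ⟨u, hu, rfl⟩ := Finset.mem_image.1 hP
    simp only [Finset.mem_product] at hu
    exact ⟨hu.1, hu.2.1⟩
  refine le_trans ?_ (hC p R B _ (max A.card L) hRc hBc hM (le_max_of_le_right hL) ?_)
  · rw [rdI_card]
    norm_cast
    refine Finset.card_le_card_of_injOn (fun z => (((-z.2.1, -z.2.2.1, z.2.2.2 * z.2.2.1)),
      ((z.1.1, z.1.2.1, z.1.2.2 * z.1.2.1)))) ?_ ?_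
    · rintro ⟨⟨a, y, d⟩, c, y', b⟩ hz
      simp only [Finset.coe_filter, Finset.mem_product, Set.mem_setOf_eq] at hz ⊢
      obtain ⟨⟨⟨ha, hy, hd⟩, hc, hy', hb⟩, h⟩ := hz
      refine ⟨⟨Finset.mem_image.2 ⟨(c, y', b), by simp [hc, hy', hb], rfl⟩,
        Finset.mem_image.2 ⟨(a, y, d), by simp [ha, hy, hd], rfl⟩⟩, ?_⟩
      unfold rdinc
      linear_combination h
    · rintro ⟨⟨a, y, d⟩, c, y', b⟩ hz ⟨⟨a2, y2, d2⟩, c2, y2', b2⟩ hz2 h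
      simp only [Finset.coe_filter, Finset.mem_product, Set.mem_setOf_eq] at hz
      obtain ⟨⟨⟨ha, hy, hd⟩, hc, hy', hb⟩, _⟩ := hz
      simp only [Prod.mk.injEq, neg_inj] at h
      obtain ⟨⟨rfl, rfl, h1⟩, rfl, rfl, h2⟩ := h
      rw [mul_right_cancel₀ (hY0' _ hy') h1, mul_right_cancel₀ (hY0 _ hy) h2]
  · intro π hπ α β γ hαβ
    rcases eq_or_ne β 0 with hb | hb
    · have ha : α ≠ 0 := by tauto
      refine (Finset.card_le_card_of_injOn (t := Y) (fun P => P.2.1) ?_ ?_).trans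
        (hY.trans (le_max_right _ _))
      · intro P hP
        exact (hRm P (Finset.mem_filter.1 (Finset.mem_coe.1 hP)).1).2
      · rintro ⟨x, y, z⟩ hP ⟨x2, y2, z2⟩ hP2 h
        have e1 := (Finset.mem_filter.1 (Finset.mem_coe.1 hP)).2
        have e2 := (Finset.mem_filter.1 (Finset.mem_coe.1 hP2)).2
        simp only [rdinc] at e1 e2 h
        subst h
        have : x = x2 := mul_left_cancel₀ ha (by linear_combination e1.2 - e2.2)
        subst this
        rw [e1.1, e2.1]
    · refine (Finset.card_le_card_of_injOn (t := A) (fun P => P.1) ?_ ?_).trans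
        (le_max_left _ _)
      · intro P hP
        exact (hRm P (Finset.mem_filter.1 (Finset.mem_coe.1 hP)).1).1
      · rintro ⟨x, y, z⟩ hP ⟨x2, y2, z2⟩ hP2 h
        have e1 := (Finset.mem_filter.1 (Finset.mem_coe.1 hP)).2
        have e2 := (Finset.mem_filter.1 (Finset.mem_coe.1 hP2)).2
        simp only [rdinc] at e1 e2 h
        subst h
        have : y = y2 := mul_left_cancel₀ hb (by linear_combination e1.2 - e2.2)
        subst this
        rw [e1.1, e2.1]

abbrev rdd {p : ℕ} (u : ZMod p × ZMod p) : ZMod p := u.1 - u.2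

theorem rdd_ne {p : ℕ} (A : Finset (ZMod p)) : ∀ u ∈ A.offDiag, rdd u ≠ 0 := by
  intro u hu
  rw [Finset.mem_offDiag] at hu
  exact sub_ne_zero.2 hu.2.2

theorem rd_E2up (C : ℝ) (hC : rdHyp C) (p : ℕ) [Fact p.Prime] (A : Finset (ZMod p))
    (hA : 1 ≤ A.card) (hM : (A.card : ℝ) ^ 2 * A.card ≤ (p : ℝ) ^ 2 / 1000) :
    (∑ s, ((rdP A.offDiag rdd s).card : ℝ) ^ 2) ≤ (C * (((A.card : ℝ) ^ 2 * A.card) ^ ((3 : ℝ) / 2)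
        + A.card * ((A.card : ℝ) ^ 2 * A.card) ^ (1 + (1 : ℝ) / 1000))) * (A.card : ℝ) ^ 2 := by
  set X := A.offDiag with hX
  set bnd := C * (((A.card : ℝ) ^ 2 * A.card) ^ ((3 : ℝ) / 2)
        + A.card * ((A.card : ℝ) ^ 2 * A.card) ^ (1 + (1 : ℝ) / 1000)) with hbnd
  have e := rd_E2eq X rdd (rdd_ne A)
  have e' : (∑ s, ((rdP X rdd s).card : ℝ) ^ 2) = ((((X ×ˢ X) ×ˢ (X ×ˢ X)).filter fun z =>
      rdd z.1.1 * rdd z.2.2 = rdd z.2.1 * rdd z.1.2).card : ℝ) := by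
    exact_mod_cast e
  rw [e']
  set S := (((X ×ˢ X) ×ˢ (X ×ˢ X)).filter fun z =>
      rdd z.1.1 * rdd z.2.2 = rdd z.2.1 * rdd z.1.2) with hS
  have hmap : ∀ z ∈ S, (z.1.2.2, z.2.2.2) ∈ A ×ˢ A := by
    intro z hz
    simp only [hS, hX, Finset.mem_filter, Finset.mem_product, Finset.mem_offDiag] at hz ⊢
    tauto
  have hfib : ∀ w ∈ A ×ˢ A, ((S.filter fun z => (z.1.2.2, z.2.2.2) = w).card : ℝ) ≤ bnd := by
    rintro ⟨e, f⟩ hw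
    rw [Finset.mem_product] at hw
    have hy := rd_Y C hC p A ((A.erase e).image fun x => x - e) ((A.erase f).image fun x => x - f)
      A.card (by
        intro y hy
        obtain ⟨x, hx, rfl⟩ := Finset.mem_image.1 hy
        exact sub_ne_zero.2 (Finset.mem_erase.1 hx).1) (by
        intro y hy
        obtain ⟨x, hx, rfl⟩ := Finset.mem_image.1 hy
        exact sub_ne_zero.2 (Finset.mem_erase.1 hx).1)
      (Finset.card_image_le.trans (Finset.card_erase_le))
      (Finset.card_image_le.trans (Finset.card_erase_le)) hA hM
    rw [max_self] at hy
    refine le_trans ?_ hy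
    norm_cast
    refine Finset.card_le_card_of_injOn (fun z => ((z.1.1.1, rdd z.1.2, z.2.1.2),
      (z.2.1.1, rdd z.2.2, z.1.1.2))) ?_ ?_
    · rintro ⟨⟨⟨a, b⟩, v, v1⟩, ⟨c, d⟩, w, w1⟩ hz
      simp only [hS, hX, Finset.coe_filter, Finset.mem_filter, Finset.mem_product,
        Finset.mem_offDiag, Set.mem_setOf_eq, Prod.mk.injEq, rdd] at hz ⊢
      obtain ⟨⟨⟨⟨⟨ha, hb, _⟩, hv, _, hvv⟩, ⟨hc, hd, _⟩, hw9, _, hww⟩, h⟩, rfl, rfl⟩ := hz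
      refine ⟨⟨⟨ha, Finset.mem_image.2 ⟨v, Finset.mem_erase.2 ⟨hvv, hv⟩, rfl⟩, hd⟩, hc,
        Finset.mem_image.2 ⟨w, Finset.mem_erase.2 ⟨hww, hw9⟩, rfl⟩, hb⟩, h⟩
    · rintro ⟨⟨⟨a, b⟩, v, v1⟩, ⟨c, d⟩, w, w1⟩ hz ⟨⟨⟨a2, b2⟩, v2, v12⟩, ⟨c2, d2⟩, w2, w12⟩ hz2 h
      simp only [Finset.coe_filter, Set.mem_setOf_eq, Prod.mk.injEq] at hz hz2
      simp only [Prod.mk.injEq, rdd] at h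
      obtain ⟨_, rfl, rfl⟩ := hz
      obtain ⟨_, rfl, rfl⟩ := hz2
      obtain ⟨⟨rfl, h1, rfl⟩, rfl, h2, rfl⟩ := h
      rw [sub_left_inj] at h1 h2
      rw [h1, h2]
  rw [Finset.card_eq_sum_card_fiberwise hmap]
  push_cast
  refine (Finset.sum_le_card_nsmul _ _ bnd hfib).trans (le_of_eq ?_)
  rw [Finset.card_product, nsmul_eq_mul]
  push_cast
  ring

theorem rd_Wup (C : ℝ) (hC : rdHyp C) (p : ℕ) [Fact p.Prime] (A G : Finset (ZMod p))
    (hG0 : ∀ g ∈ G, g ≠ 0) (hAG : A.card ≤ G.card)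
    (hA : 1 ≤ G.card) (hM : (A.card : ℝ) ^ 2 * G.card ≤ (p : ℝ) ^ 2 / 1000) :
    (∑ q, ((rdP A.offDiag rdd q).card : ℝ) * (rdr G q).card) ≤
      C * (((A.card : ℝ) ^ 2 * G.card) ^ ((3 : ℝ) / 2)
        + G.card * ((A.card : ℝ) ^ 2 * G.card) ^ (1 + (1 : ℝ) / 1000)) := by
  have hy := rd_Y C hC p A G G G.card hG0 hG0 le_rfl le_rfl hA hM
  rw [max_eq_right hAG] at hy
  refine le_trans ?_ hy
  have e : ∑ q, (rdP A.offDiag rdd q).card * (rdr G q).card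
      = (Finset.univ.sigma fun s : ZMod p => rdP A.offDiag rdd s ×ˢ rdr G s).card := by
    rw [Finset.card_sigma]
    refine Finset.sum_congr rfl fun s _ => ?_
    rw [Finset.card_product]
  have e' : (∑ q, ((rdP A.offDiag rdd q).card : ℝ) * (rdr G q).card)
      = ((Finset.univ.sigma fun s : ZMod p => rdP A.offDiag rdd s ×ˢ rdr G s).card : ℝ) := by
    exact_mod_cast e
  rw [e']
  norm_cast
  refine Finset.card_le_card_of_injOn (fun z => ((z.2.1.1.1, z.2.2.1, z.2.1.2.2),
      (z.2.1.2.1, z.2.2.2, z.2.1.1.2))) ?_ ?_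
  · rintro ⟨q, ⟨⟨a, b⟩, c, d⟩, g, g'⟩ hz
    simp only [Finset.coe_sigma, Set.mem_sigma_iff, Finset.mem_coe, Finset.mem_univ, true_and,
      Finset.mem_filter, Finset.mem_product, rdP_mem, rdr, Finset.mem_offDiag, rdd] at hz ⊢
    obtain ⟨⟨⟨⟨ha, hb, _⟩, hc, hd, _⟩, h1⟩, ⟨hg, hg'⟩, h2⟩ := hz
    refine ⟨⟨⟨ha, hg, hd⟩, hc, hg', hb⟩, ?_⟩
    rw [h1, h2]; ring
  · rintro ⟨q, ⟨⟨a, b⟩, c, d⟩, g, g'⟩ hz ⟨q2, ⟨⟨a2, b2⟩, c2, d2⟩, g2, g2'⟩ hz2 h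
    simp only [Finset.coe_sigma, Set.mem_sigma_iff, Finset.mem_coe, Finset.mem_univ, true_and,
      Finset.mem_filter, Finset.mem_product, rdP_mem, rdr, Finset.mem_offDiag, rdd] at hz hz2
    simp only [Prod.mk.injEq] at h
    obtain ⟨⟨rfl, rfl, rfl⟩, rfl, rfl, rfl⟩ := h
    have a := hz.2.2
    have b := hz2.2.2
    have : q = q2 := mul_right_cancel₀ (hG0 _ hz.2.1.2) (a.symm.trans b)
    subst this
    rfl


def rdi {p : ℕ} (A : Finset (ZMod p)) (l : ZMod p × ZMod p) : ℕ :=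
  (A.filter fun x => l.1 * x + l.2 ∈ A).card

theorem rd_rich_cs {p : ℕ} (A : Finset (ZMod p)) (L : Finset (ZMod p × ZMod p)) (k : ℕ)
    (hk : ∀ l ∈ L, k ≤ rdi A l) :
    (k * L.card) ^ 2 ≤ A.card * rdI (A ×ˢ L) (A ×ˢ L) := by
  set S := (L ×ˢ A).filter fun z => z.1.1 * z.2 + z.1.2 ∈ A with hS
  have h1 : k * L.card ≤ S.card := by
    rw [hS, Finset.card_filter, Finset.sum_product, mul_comm, ← smul_eq_mul]
    refine Finset.card_nsmul_le_sum _ _ _ fun l hl => ?_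
    rw [← Finset.card_filter]
    exact hk l hl
  have h2 := rd_cs S (fun z => z.1.1 * z.2 + z.1.2) A (fun z hz => (Finset.mem_filter.1 hz).2)
  refine (Nat.pow_le_pow_left h1 2).trans (h2.trans (Nat.mul_le_mul le_rfl ?_))
  rw [rdI_card]
  refine Finset.card_le_card_of_injOn (fun z => ((z.1.2, z.2.1.1, z.2.1.2),
    (z.2.2, z.1.1.1, z.1.1.2))) ?_ ?_
  · rintro ⟨⟨⟨s, t⟩, x⟩, ⟨s', t'⟩, x'⟩ hz
    simp only [hS, Finset.coe_filter, Finset.mem_filter, Finset.mem_product,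
      Set.mem_ofPred_eq, rdinc] at hz ⊢
    obtain ⟨⟨⟨⟨h1, h2⟩, _⟩, ⟨h3, h4⟩, _⟩, h⟩ := hz
    refine ⟨⟨⟨h2, h3⟩, h4, h1⟩, ?_⟩
    linear_combination h
  · rintro ⟨⟨⟨s, t⟩, x⟩, ⟨s', t'⟩, x'⟩ _ ⟨⟨⟨s2, t2⟩, x2⟩, ⟨s2', t2'⟩, x2'⟩ _ h
    simp only [Prod.mk.injEq] at h ⊢
    tauto

theorem rd_pencil (p : ℕ) [Fact p.Prime] (A : Finset (ZMod p)) (Q : Finset (ZMod p × ZMod p))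
    (k : ℕ) (hk : ∀ l ∈ Q, k ≤ rdi A l) (x y : ZMod p) (hQ : ∀ l ∈ Q, l.1 * x + l.2 = y) :
    Q.card * (k - 1) ≤ A.card * A.card := by
  set S := (Q ×ˢ A).filter fun z => z.2 ≠ x ∧ z.1.1 * z.2 + z.1.2 ∈ A with hS
  have h1 : Q.card * (k - 1) ≤ S.card := by
    rw [hS, Finset.card_filter, Finset.sum_product, ← smul_eq_mul]
    refine Finset.card_nsmul_le_sum _ _ _ fun l hl => ?_
    rw [← Finset.card_filter]
    have : (A.filter fun x => l.1 * x + l.2 ∈ A).erase x ⊆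
        A.filter fun a => a ≠ x ∧ l.1 * a + l.2 ∈ A := by
      intro a ha
      simp only [Finset.mem_erase, Finset.mem_filter] at ha ⊢
      tauto
    refine le_trans ?_ (Finset.card_le_card this)
    exact (Nat.sub_le_sub_right (hk l hl) 1).trans Finset.pred_card_le_card_erase
  refine h1.trans ?_
  rw [← Finset.card_product]
  refine Finset.card_le_card_of_injOn (fun z => (z.2, z.1.1 * z.2 + z.1.2)) ?_ ?_
  · rintro ⟨⟨s, t⟩, a⟩ hz
    simp only [hS, Finset.coe_filter, Finset.mem_product, Set.mem_ofPred_eq, Finset.coe_product,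
      Set.mem_prod, Finset.mem_coe] at hz ⊢
    tauto
  · rintro ⟨⟨s, t⟩, a⟩ hz ⟨⟨s2, t2⟩, a2⟩ hz2 h
    simp only [hS, Finset.coe_filter, Finset.mem_product, Set.mem_ofPred_eq] at hz hz2
    simp only [Prod.mk.injEq] at h
    obtain ⟨rfl, h⟩ := h
    have e1 := hQ _ hz.1.1
    have e2 := hQ _ hz2.1.1
    simp only at e1 e2
    have : s = s2 := mul_right_cancel₀ (sub_ne_zero.2 hz.2.1)
      (by linear_combination h - e1 + e2)
    subst this
    have : t = t2 := by linear_combination h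
    rw [this]

theorem rd_rich (C : ℝ) (hC : rdHyp C) (p : ℕ) [Fact p.Prime] (A : Finset (ZMod p))
    (L : Finset (ZMod p × ZMod p)) (k : ℕ) (hk2 : 2 ≤ k) (hkN : k ≤ A.card)
    (hk : ∀ l ∈ L, k ≤ rdi A l) (hM : (A.card : ℝ) * L.card ≤ (p : ℝ) ^ 2 / 1000) :
    ((k : ℝ) * L.card) ^ 2 ≤ A.card * (C * (((A.card : ℝ) * L.card) ^ ((3 : ℝ) / 2)
        + ((A.card * A.card / (k - 1) : ℕ) : ℝ) * ((A.card : ℝ) * L.card) ^ (1 + (1 : ℝ) / 1000))) := by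
  have h1 : ((k : ℝ) * L.card) ^ 2 ≤ A.card * (rdI (A ×ˢ L) (A ×ˢ L) : ℝ) := by
    exact_mod_cast rd_rich_cs A L k hk
  refine h1.trans (mul_le_mul_of_nonneg_left ?_ (Nat.cast_nonneg _))
  have hNK : A.card ≤ A.card * A.card / (k - 1) := by
    rw [Nat.le_div_iff_mul_le (by omega)]
    exact Nat.mul_le_mul le_rfl (by omega)
  refine hC p _ _ _ _ (by rw [Finset.card_product]; push_cast; exact le_rfl)
    (by rw [Finset.card_product]; push_cast; exact le_rfl) hM (by omega) ?_
  rintro ⟨x, s', t'⟩ hπ α β γ hαβ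
  rcases eq_or_ne β 0 with hb | hb
  · have ha : α ≠ 0 := by tauto
    rw [Nat.le_div_iff_mul_le (by omega)]
    have hinj : Set.InjOn (fun P : ZMod p × ZMod p × ZMod p => P.2)
        (((A ×ˢ L).filter fun P => rdinc P (x, s', t') ∧ α * P.1 + β * P.2.1 = γ) :
          Finset (ZMod p × ZMod p × ZMod p)) := by
      rintro ⟨x1, l1⟩ h1 ⟨x2, l2⟩ h2 h
      have e1 := (Finset.mem_filter.1 (Finset.mem_coe.1 h1)).2.2
      have e2 := (Finset.mem_filter.1 (Finset.mem_coe.1 h2)).2.2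
      simp only [hb, zero_mul, add_zero] at e1 e2 h
      rw [h, mul_left_cancel₀ ha (e1.trans e2.symm)]
    rw [← Finset.card_image_of_injOn hinj]
    refine rd_pencil p A _ k ?_ x (s' * (γ / α) + t') ?_
    · intro l hl
      obtain ⟨P, hP, rfl⟩ := Finset.mem_image.1 hl
      exact hk _ (Finset.mem_product.1 (Finset.mem_filter.1 hP).1).2
    · intro l hl
      obtain ⟨⟨x1, s, t⟩, hP, rfl⟩ := Finset.mem_image.1 hl
      have e := (Finset.mem_filter.1 hP).2
      simp only [rdinc, hb, zero_mul, add_zero] at e ⊢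
      have : x1 = γ / α := by rw [eq_div_iff ha, mul_comm]; exact e.2
      rw [← this]
      linear_combination e.1
  · refine (Finset.card_le_card_of_injOn (t := A) (fun P => P.1) ?_ ?_).trans hNK
    · intro P hP
      exact (Finset.mem_product.1 (Finset.mem_filter.1 (Finset.mem_coe.1 hP)).1).1
    · rintro ⟨x, y, z⟩ hP ⟨x2, y2, z2⟩ hP2 h
      have e1 := (Finset.mem_filter.1 (Finset.mem_coe.1 hP)).2
      have e2 := (Finset.mem_filter.1 (Finset.mem_coe.1 hP2)).2
      simp only [rdinc] at e1 e2 h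
      subst h
      have : y = y2 := mul_left_cancel₀ hb (by linear_combination e1.2 - e2.2)
      subst this
      rw [e1.1, e2.1]


theorem rd_rich_real (C n l k : ℝ) (K : ℝ) (hC : 1 ≤ C) (hn : 1 ≤ n) (hl : 0 ≤ l) (hk : 2 ≤ k)
    (hkn : k ≤ n) (hln : l ≤ n ^ 4) (hK : K ≤ 2 * n ^ 2 / k)
    (h : (k * l) ^ 2 ≤ n * (C * ((n * l) ^ ((3 : ℝ) / 2) + K * (n * l) ^ (1 + (1 : ℝ) / 1000)))) :
    k ^ 4 * l ≤ 4 * C ^ 2 * n ^ 5 * n ^ ((1 : ℝ) / 200) := by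
  set g := n ^ ((1 : ℝ) / 200) with hg
  have hg1 : 1 ≤ g := Real.one_le_rpow hn (by norm_num)
  rcases hl.eq_or_lt with h0 | h0
  · rw [← h0, mul_zero]; positivity
  have hnl : 0 ≤ n * l := by positivity
  rw [rd_rpow32 _ hnl, rd_rpow1d _ hnl] at h
  have hgl : (n * l) ^ ((1 : ℝ) / 1000) ≤ g := by
    have h5 : n * l ≤ n ^ (5 : ℝ) := by
      have : n ^ (5 : ℝ) = n * n ^ 4 := by
        rw [show (5 : ℝ) = ((5 : ℕ) : ℝ) by norm_num, Real.rpow_natCast]; ring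
      rw [this]; gcongr
    calc (n * l) ^ ((1 : ℝ) / 1000) ≤ (n ^ (5 : ℝ)) ^ ((1 : ℝ) / 1000) := by gcongr
      _ = g := by
        rw [← Real.rpow_mul (by linarith), hg]; norm_num
  have hk0 : 0 < k := by linarith
  have h1 : k ^ 2 * l ≤ n ^ 2 * C * (√(n * l) + 2 * n ^ 2 / k * g) := by
    refine le_of_mul_le_mul_right ?_ h0
    calc k ^ 2 * l * l = (k * l) ^ 2 := by ring
      _ ≤ _ := h
      _ ≤ n * (C * (n * l * √(n * l) + 2 * n ^ 2 / k * (n * l * g))) := by gcongr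
      _ = _ := by ring
  set r := √(n * l) with hr
  have hrr : r * r = n * l := Real.mul_self_sqrt hnl
  have hr0 : 0 ≤ r := Real.sqrt_nonneg _
  have hn0 : 0 < n := by linarith
  rcases le_total (2 * n ^ 2 / k * g) r with hc | hc
  · have h2 : k ^ 2 * l ≤ 2 * C * n ^ 2 * r := by
      have : n ^ 2 * C * (r + 2 * n ^ 2 / k * g) ≤ n ^ 2 * C * (r + r) := by gcongr
      linarith
    have h3 : (k ^ 2 * l) ^ 2 ≤ (2 * C * n ^ 2 * r) ^ 2 := by gcongr
    have h4 : k ^ 4 * l * l ≤ 4 * C ^ 2 * n ^ 5 * l := by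
      calc k ^ 4 * l * l = (k ^ 2 * l) ^ 2 := by ring
        _ ≤ _ := h3
        _ = 4 * C ^ 2 * n ^ 4 * (r * r) := by ring
        _ = _ := by rw [hrr]; ring
    have h5 := le_of_mul_le_mul_right h4 h0
    refine h5.trans ?_
    exact le_mul_of_one_le_right (by positivity) hg1
  · have h2 : k ^ 2 * l ≤ n ^ 2 * C * (2 * (2 * n ^ 2 / k * g)) := by
      refine h1.trans ?_
      have : r + 2 * n ^ 2 / k * g ≤ 2 * (2 * n ^ 2 / k * g) := by linarith
      gcongr
    have h3 : k ^ 3 * l ≤ 4 * C * n ^ 4 * g := by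
      calc k ^ 3 * l = k * (k ^ 2 * l) := by ring
        _ ≤ k * (n ^ 2 * C * (2 * (2 * n ^ 2 / k * g))) := by gcongr
        _ = _ := by field_simp; ring
    calc k ^ 4 * l = k * (k ^ 3 * l) := by ring
      _ ≤ n * (4 * C * n ^ 4 * g) := by gcongr
      _ = 4 * C * n ^ 5 * g := by ring
      _ ≤ 4 * C ^ 2 * n ^ 5 * g := by
        have : C ≤ C ^ 2 := by nlinarith
        gcongr

theorem rd_rich_all (C : ℝ) (hC1 : 1 ≤ C) (hC : rdHyp C) (p : ℕ) [Fact p.Prime]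
    (A : Finset (ZMod p)) (hN1 : 1 ≤ A.card)
    (hp : (A.card : ℝ) ^ ((32 : ℝ) / 9) ≤ (p : ℝ) ^ 2)
    (hN : 5000 * C ^ 2 ≤ (A.card : ℝ) ^ ((1 : ℝ) / 100))
    (k : ℕ) (hk2 : 2 ≤ k) (hkN : k ≤ A.card) (hk : (A.card : ℝ) ^ ((615 : ℝ) / 1000) ≤ k) :
    (k : ℝ) ^ 4 * ((Finset.univ.filter fun l : ZMod p × ZMod p => k ≤ rdi A l).card : ℝ)
      ≤ 4 * C ^ 2 * (A.card : ℝ) ^ 5 * (A.card : ℝ) ^ ((1 : ℝ) / 200) := by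
  set n : ℝ := (A.card : ℝ) with hn
  have hn1 : 1 ≤ n := by rw [hn]; exact_mod_cast hN1
  have hn0 : 0 < n := by linarith
  have hk0 : (0 : ℝ) < k := by exact_mod_cast (by omega : 0 < k)
  by_contra hcon
  push Not at hcon
  set T := 4 * C ^ 2 * n ^ 5 * n ^ ((1 : ℝ) / 200) with hT
  have hT0 : 0 ≤ T := by positivity
  have hb : T / (k : ℝ) ^ 4 < ((Finset.univ.filter fun l : ZMod p × ZMod p => k ≤ rdi A l).card : ℝ) := by
    rw [div_lt_iff₀ (by positivity)]; linarith
  set b := T / (k : ℝ) ^ 4 with hbd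
  have hb0 : 0 ≤ b := by positivity
  have hm : ⌊b⌋₊ + 1 ≤ (Finset.univ.filter fun l : ZMod p × ZMod p => k ≤ rdi A l).card := by
    have := (Nat.floor_lt hb0).2 hb
    omega
  obtain ⟨L, hLs, hLc⟩ := Finset.exists_subset_card_eq hm
  have hLr : b < (L.card : ℝ) := by
    rw [hLc]; push_cast; exact Nat.lt_floor_add_one b
  have hLr2 : (L.card : ℝ) ≤ b + 1 := by
    rw [hLc]; push_cast; linarith [Nat.floor_le hb0]
  have hk4 : n ^ ((246 : ℝ) / 100) ≤ (k : ℝ) ^ 4 := by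
    calc n ^ ((246 : ℝ) / 100) = (n ^ ((615 : ℝ) / 1000)) ^ 4 := by
          rw [← Real.rpow_natCast, ← Real.rpow_mul hn0.le]; norm_num
      _ ≤ _ := by gcongr
  have hTe : T = 4 * C ^ 2 * (n ^ ((246 : ℝ) / 100) * n ^ ((2545 : ℝ) / 1000)) := by
    rw [hT, mul_assoc, ← Real.rpow_natCast n 5, ← Real.rpow_add hn0, ← Real.rpow_add hn0]
    norm_num
  have hb2 : b ≤ 4 * C ^ 2 * n ^ ((2545 : ℝ) / 1000) := by
    rw [hbd, div_le_iff₀ (by positivity), hTe]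
    have : 0 ≤ 4 * C ^ 2 * n ^ ((2545 : ℝ) / 1000) := by positivity
    nlinarith
  have h1n : 1 ≤ C ^ 2 * n ^ ((2545 : ℝ) / 1000) := by
    have a : 1 ≤ C ^ 2 := by nlinarith
    have b : 1 ≤ n ^ ((2545 : ℝ) / 1000) := Real.one_le_rpow hn1 (by norm_num)
    nlinarith
  have hL5 : (L.card : ℝ) ≤ 5 * C ^ 2 * n ^ ((2545 : ℝ) / 1000) := by linarith
  have hL6 : (L.card : ℝ) ≤ n ^ ((2555 : ℝ) / 1000) / 1000 := by
    have e : n ^ ((2555 : ℝ) / 1000) = n ^ ((1 : ℝ) / 100) * n ^ ((2545 : ℝ) / 1000) := by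
      rw [← Real.rpow_add hn0]; norm_num
    rw [e]
    have : 5000 * C ^ 2 * n ^ ((2545 : ℝ) / 1000) ≤ n ^ ((1 : ℝ) / 100) * n ^ ((2545 : ℝ) / 1000) := by
      gcongr
    linarith
  have hL7 : (L.card : ℝ) ≤ n ^ 4 := by
    have e : n ^ ((2555 : ℝ) / 1000) ≤ n ^ (4 : ℝ) := Real.rpow_le_rpow_of_exponent_le hn1 (by norm_num)
    have e2 : n ^ (4 : ℝ) = n ^ 4 := by
      rw [show (4 : ℝ) = ((4 : ℕ) : ℝ) by norm_num, Real.rpow_natCast]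
    have h7 : 0 ≤ n ^ 4 := by positivity
    rw [e2] at e
    have h8 : n ^ ((2555 : ℝ) / 1000) / 1000 ≤ n ^ 4 := by linarith
    exact hL6.trans h8
  have hM : n * L.card ≤ (p : ℝ) ^ 2 / 1000 := by
    have e : n * n ^ ((2555 : ℝ) / 1000) = n ^ ((3555 : ℝ) / 1000) := by
      nth_rewrite 1 [← Real.rpow_one n]
      rw [← Real.rpow_add hn0]; norm_num
    have e2 : n ^ ((3555 : ℝ) / 1000) ≤ n ^ ((32 : ℝ) / 9) :=
      Real.rpow_le_rpow_of_exponent_le hn1 (by norm_num)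
    have : n * L.card ≤ n * (n ^ ((2555 : ℝ) / 1000) / 1000) := by gcongr
    have e3 : n * (n ^ ((2555 : ℝ) / 1000) / 1000) = (n * n ^ ((2555 : ℝ) / 1000)) / 1000 := by ring
    rw [e3, e] at this
    linarith
  have hrich := rd_rich C hC p A L k hk2 hkN (fun l hl => (Finset.mem_filter.1 (hLs hl)).2) hM
  have hkr : (2 : ℝ) ≤ k := by exact_mod_cast hk2
  have hfin := rd_rich_real C n L.card k _ hC1 hn1 (Nat.cast_nonneg _) hkr (by
    rw [hn]; exact_mod_cast hkN) hL7 (by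
    refine Nat.cast_div_le.trans ?_
    rw [Nat.cast_sub (by omega)]
    push_cast
    rw [div_le_div_iff₀ (by linarith) hk0]
    nlinarith [sq_nonneg n]) hrich
  have : T < (k : ℝ) ^ 4 * L.card := by
    rw [hbd, div_lt_iff₀ (by positivity)] at hLr
    linarith
  linarith

theorem rd_pow4 (i : ℕ) : i ^ 4 ≤ ∑ k ∈ Finset.Icc 1 i, 4 * k ^ 3 := by
  induction i with
  | zero => simp
  | succ i ih =>
    rw [Finset.sum_Icc_succ_top (by omega)]
    refine le_trans ?_ (Nat.add_le_add_right ih _)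
    ring_nf
    nlinarith [sq_nonneg i, Nat.zero_le (i^2), Nat.zero_le i, Nat.zero_le (i^3)]

theorem rdi_le {p : ℕ} (A : Finset (ZMod p)) (l) : rdi A l ≤ A.card := Finset.card_filter_le _ _

theorem rd_S4 (p : ℕ) [Fact p.Prime] (A : Finset (ZMod p)) (κ : ℕ) (T : ℝ) (hκN : κ ≤ A.card)
    (hκ : 1 ≤ κ) (h : ∀ k : ℕ, κ ≤ k → k ≤ A.card →
    (k : ℝ) ^ 4 * ((Finset.univ.filter fun l : ZMod p × ZMod p => k ≤ rdi A l).card : ℝ) ≤ T) :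
    ∑ l ∈ Finset.univ.filter (fun l : ZMod p × ZMod p => κ ≤ rdi A l), (rdi A l : ℝ) ^ 4 ≤
      4 * T * (1 + Real.log A.card) := by
  have hT0 : 0 ≤ T := le_trans (by positivity) (h κ le_rfl hκN)
  set Lκ := Finset.univ.filter (fun l : ZMod p × ZMod p => κ ≤ rdi A l) with hL
  have h1 : ∑ l ∈ Lκ, (rdi A l) ^ 4 ≤
      ∑ k ∈ Finset.Icc 1 A.card, 4 * k ^ 3 * (Lκ.filter fun l => k ≤ rdi A l).card := by
    have : ∀ l ∈ Lκ, (rdi A l) ^ 4 ≤ ∑ k ∈ Finset.Icc 1 A.card,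
        4 * k ^ 3 * (if k ≤ rdi A l then 1 else 0) := by
      intro l _
      refine (rd_pow4 _).trans ?_
      simp only [mul_ite, mul_one, mul_zero]
      rw [← Finset.sum_filter]
      refine le_of_eq (Finset.sum_congr ?_ fun _ _ => rfl)
      ext k
      have := rdi_le A l
      simp only [Finset.mem_Icc, Finset.mem_filter]
      omega
    refine (Finset.sum_le_sum this).trans ?_
    rw [Finset.sum_comm]
    refine le_of_eq (Finset.sum_congr rfl fun k _ => ?_)
    rw [← Finset.mul_sum, Finset.card_filter]
  have h2 : (∑ l ∈ Lκ, (rdi A l : ℝ) ^ 4) ≤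
      ∑ k ∈ Finset.Icc 1 A.card, 4 * (k : ℝ) ^ 3 * ((Lκ.filter fun l => k ≤ rdi A l).card : ℝ) := by
    exact_mod_cast h1
  refine h2.trans ?_
  have h3 : ∀ k ∈ Finset.Icc 1 A.card, 4 * (k : ℝ) ^ 3 * ((Lκ.filter fun l => k ≤ rdi A l).card : ℝ)
      ≤ 4 * T * (k : ℝ)⁻¹ := by
    intro k hk
    rw [Finset.mem_Icc] at hk
    have hk0 : (0 : ℝ) < k := by exact_mod_cast (by omega : 0 < k)
    have hh := h (max k κ) (le_max_right _ _) (max_le hk.2 hκN)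
    have hsub : (Lκ.filter fun l => k ≤ rdi A l) ⊆
        Finset.univ.filter fun l : ZMod p × ZMod p => max k κ ≤ rdi A l := by
      intro l hl
      simp only [hL, Finset.mem_filter, Finset.mem_univ, true_and] at hl ⊢
      exact max_le hl.2 hl.1
    have hc : ((Lκ.filter fun l => k ≤ rdi A l).card : ℝ) ≤
        ((Finset.univ.filter fun l : ZMod p × ZMod p => max k κ ≤ rdi A l).card : ℝ) := by
      exact_mod_cast Finset.card_le_card hsub
    have hkm : (k : ℝ) ≤ (max k κ : ℕ) := by exact_mod_cast le_max_left k κ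
    have h4 : (k : ℝ) ^ 4 * ((Lκ.filter fun l => k ≤ rdi A l).card : ℝ) ≤ T := by
      refine le_trans ?_ hh
      gcongr
    rw [← div_eq_mul_inv, le_div_iff₀ hk0]
    linarith
  refine (Finset.sum_le_sum h3).trans ?_
  rw [← Finset.mul_sum]
  have h5 := harmonic_le_one_add_log A.card
  rw [harmonic_eq_sum_Icc] at h5
  push_cast at h5
  gcongr


theorem rdi_fib {p : ℕ} (A : Finset (ZMod p)) (s t : ZMod p) :
    ((A ×ˢ A).filter fun z => z.1 - s * z.2 = t).card = rdi A (s, t) := by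
  unfold rdi
  refine Finset.card_bij (fun z _ => z.2) ?_ ?_ ?_
  · rintro ⟨a, c⟩ hz
    simp only [Finset.mem_filter, Finset.mem_product] at hz ⊢
    refine ⟨hz.1.2, ?_⟩
    rw [← hz.2]
    convert hz.1.1 using 1
    ring
  · rintro ⟨a, c⟩ hz ⟨a', c'⟩ hz' h
    simp only [Finset.mem_filter, Finset.mem_product] at hz hz' h
    subst h
    have : a = a' := by linear_combination hz.2 - hz'.2
    rw [this]
  · intro c hc
    simp only [Finset.mem_filter] at hc
    refine ⟨(s * c + t, c), ?_, rfl⟩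
    simp only [Finset.mem_filter, Finset.mem_product]
    exact ⟨⟨hc.2, hc.1⟩, by ring⟩

theorem rdi_sum (p : ℕ) [Fact p.Prime] (A : Finset (ZMod p)) (s : ZMod p) :
    ∑ t, rdi A (s, t) = A.card ^ 2 := by
  simp_rw [← rdi_fib]
  rw [← Finset.card_eq_sum_card_fiberwise (fun _ _ => Finset.mem_coe.2 (Finset.mem_univ _)), Finset.card_product, sq]

theorem rd_rho_le (p : ℕ) [Fact p.Prime] (A : Finset (ZMod p)) (s : ZMod p) :
    (rdP A.offDiag rdd s).card ≤ ∑ t, rdi A (s, t) ^ 2 := by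
  simp_rw [← rdi_fib]
  rw [rd_fib (A ×ˢ A) (fun z => z.1 - s * z.2) Finset.univ (fun _ _ => Finset.mem_univ _)]
  refine Finset.card_le_card_of_injOn (fun z => ((z.1.1, z.2.1), (z.1.2, z.2.2))) ?_ ?_
  · rintro ⟨⟨a, b⟩, c, d⟩ hz
    rw [Finset.mem_coe, rdP_mem] at hz
    simp only [Finset.coe_filter, Finset.mem_offDiag, Finset.mem_product, Set.mem_ofPred_eq, rdd] at hz ⊢
    obtain ⟨⟨⟨ha, hb, _⟩, hc, hd, _⟩, h⟩ := hz
    exact ⟨⟨⟨ha, hc⟩, hb, hd⟩, by linear_combination h⟩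
  · rintro ⟨⟨a, b⟩, c, d⟩ _ ⟨⟨a', b'⟩, c', d'⟩ _ h
    simp only [Prod.mk.injEq] at h ⊢
    tauto

theorem rd_h3 {κ : Type*} (S : Finset κ) (i : κ → ℝ) (hi : ∀ t, 0 ≤ i t) (M : ℝ)
    (hM : ∑ t ∈ S, i t ≤ M) :
    (∑ t ∈ S, i t ^ 2) ^ 3 ≤ M ^ 2 * ∑ t ∈ S, i t ^ 4 := by
  have hM0 : 0 ≤ M := (Finset.sum_nonneg fun t _ => hi t).trans hM
  set h := ∑ t ∈ S, i t ^ 2 with hh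
  set S3 := ∑ t ∈ S, i t ^ 3 with hS3
  set S4 := ∑ t ∈ S, i t ^ 4 with hS4
  have h0 : 0 ≤ h := Finset.sum_nonneg fun t _ => pow_nonneg (hi t) _
  have h30 : 0 ≤ S3 := Finset.sum_nonneg fun t _ => pow_nonneg (hi t) _
  have h40 : 0 ≤ S4 := Finset.sum_nonneg fun t _ => pow_nonneg (hi t) _
  have h1 : h ^ 2 ≤ (∑ t ∈ S, i t) * S3 :=
    Finset.sum_sq_le_sum_mul_sum_of_sq_le_mul _ (fun t _ => hi t)
      (fun t _ => pow_nonneg (hi t) _) (fun t _ => le_of_eq (by ring))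
  have h1' : h ^ 2 ≤ M * S3 := h1.trans (mul_le_mul_of_nonneg_right hM h30)
  have h2 : S3 ^ 2 ≤ h * S4 :=
    Finset.sum_sq_le_sum_mul_sum_of_sq_le_mul _ (fun t _ => pow_nonneg (hi t) _)
      (fun t _ => pow_nonneg (hi t) _) (fun t _ => le_of_eq (by ring))
  rcases h0.eq_or_lt with hz | hz
  · rw [← hz]
    have : 0 ≤ M ^ 2 * S4 := mul_nonneg (sq_nonneg _) h40
    simpa using this
  · refine le_of_mul_le_mul_left (a := h) ?_ hz
    calc h * h ^ 3 = (h ^ 2) ^ 2 := by ring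
      _ ≤ (M * S3) ^ 2 := pow_le_pow_left₀ (sq_nonneg _) h1' 2
      _ = M ^ 2 * S3 ^ 2 := by ring
      _ ≤ M ^ 2 * (h * S4) := mul_le_mul_of_nonneg_left h2 (sq_nonneg _)
      _ = _ := by ring

theorem rd_E3 (p : ℕ) [Fact p.Prime] (A : Finset (ZMod p)) (κ : ℕ) :
    ∑ s, ((rdP A.offDiag rdd s).card : ℝ) ^ 3 ≤
      2 * (κ * (A.card : ℝ) ^ 2) * (∑ s, ((rdP A.offDiag rdd s).card : ℝ) ^ 2) +
      8 * ((A.card : ℝ) ^ 4 * ∑ l ∈ Finset.univ.filter (fun l : ZMod p × ZMod p => κ ≤ rdi A l),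
        (rdi A l : ℝ) ^ 4) := by
  have hS : ∑ l ∈ Finset.univ.filter (fun l : ZMod p × ZMod p => κ ≤ rdi A l),
        (rdi A l : ℝ) ^ 4 = ∑ s, ∑ t ∈ Finset.univ.filter (fun t => κ ≤ rdi A (s, t)),
          (rdi A (s, t) : ℝ) ^ 4 := by
    simp_rw [Finset.sum_filter]
    rw [Fintype.sum_prod_type]
  rw [hS, Finset.mul_sum, Finset.mul_sum, Finset.mul_sum, ← Finset.sum_add_distrib]
  refine Finset.sum_le_sum fun s _ => ?_
  set ρ : ℝ := ((rdP A.offDiag rdd s).card : ℝ) with hρ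
  have hρ0 : 0 ≤ ρ := Nat.cast_nonneg _
  set Q := Finset.univ.filter (fun t => κ ≤ rdi A (s, t)) with hQ
  set h : ℝ := ∑ t ∈ Q, (rdi A (s, t) : ℝ) ^ 2 with hh
  have hh0 : 0 ≤ h := Finset.sum_nonneg fun t _ => sq_nonneg _
  have hsum : ∑ t, (rdi A (s, t) : ℝ) = (A.card : ℝ) ^ 2 := by
    exact_mod_cast rdi_sum p A s
  have h3 := rd_h3 Q (fun t => (rdi A (s, t) : ℝ)) (fun _ => Nat.cast_nonneg _)
    ((A.card : ℝ) ^ 2) (by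
      rw [← hsum]
      exact Finset.sum_le_sum_of_subset_of_nonneg (Finset.subset_univ _)
        (fun _ _ _ => Nat.cast_nonneg _))
  have hρh : ρ ≤ κ * (A.card : ℝ) ^ 2 + h := by
    have h1 : ρ ≤ ∑ t, (rdi A (s, t) : ℝ) ^ 2 := by
      rw [hρ]
      exact_mod_cast rd_rho_le p A s
    refine h1.trans ?_
    rw [← Finset.sum_filter_add_sum_filter_not Finset.univ (fun t => κ ≤ rdi A (s, t)), add_comm]
    refine add_le_add ?_ le_rfl
    rw [← hsum, Finset.mul_sum]
    refine (Finset.sum_le_sum (g := fun t => (κ : ℝ) * (rdi A (s, t) : ℝ)) ?_).trans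
      (Finset.sum_le_sum_of_subset_of_nonneg (Finset.subset_univ _)
        (fun _ _ _ => by positivity))
    intro t ht
    have ht' : rdi A (s, t) ≤ κ := by
      have := (Finset.mem_filter.1 ht).2
      omega
    rw [sq]
    gcongr
  have h3' : h ^ 3 ≤ (A.card : ℝ) ^ 4 * ∑ t ∈ Q, (rdi A (s, t) : ℝ) ^ 4 := by
    calc h ^ 3 ≤ _ := h3
      _ = _ := by ring
  have ha0 : 0 ≤ κ * (A.card : ℝ) ^ 2 := by positivity
  set a := κ * (A.card : ℝ) ^ 2 with ha
  have hg0 : 0 ≤ (A.card : ℝ) ^ 4 * ∑ t ∈ Q, (rdi A (s, t) : ℝ) ^ 4 :=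
    (pow_nonneg hh0 3).trans h3'
  have main : ρ ^ 3 ≤ 2 * a * ρ ^ 2 + 8 * h ^ 3 := by
    rcases le_total h a with hc | hc
    · have : ρ ≤ 2 * a := by linarith
      have h5 : ρ * ρ ^ 2 ≤ 2 * a * ρ ^ 2 := mul_le_mul_of_nonneg_right this (sq_nonneg _)
      have : 0 ≤ h ^ 3 := pow_nonneg hh0 3
      linarith [h5, show ρ * ρ ^ 2 = ρ ^ 3 by ring]
    · have : ρ ≤ 2 * h := by linarith
      have h5 := pow_le_pow_left₀ hρ0 this 3
      have h6 : 0 ≤ 2 * a * ρ ^ 2 := by positivity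
      linarith [h5, show (2 * h) ^ 3 = 8 * h ^ 3 by ring]
  rw [Finset.mul_sum] at h3'
  linarith


theorem rd_rp (n : ℝ) (hn : 0 < n) (a b c : ℝ) (h : a + b = c) : n ^ a * n ^ b = n ^ c := by
  rw [← Real.rpow_add hn, h]

theorem rd_rm (n : ℝ) (hn : 1 ≤ n) (a b : ℝ) (h : a ≤ b) : n ^ a ≤ n ^ b :=
  Real.rpow_le_rpow_of_exponent_le hn h

theorem rd_core_real (C n T g E2 E3 W κ S4 : ℝ) (hC : 1 ≤ C) (hn : 2 ≤ n) (hT : n ^ 2 / 2 ≤ T)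
    (hg : g ≤ n ^ ((1501 : ℝ) / 1000)) (hg0 : 0 ≤ g)
    (hn0 : 32768 * 1416 ^ 2 * C ^ 5 < n ^ ((1 : ℝ) / 100))
    (h1 : T ^ 4 ≤ g * E2)
    (h2 : E2 ≤ 2 * C * n ^ ((65 : ℝ) / 10))
    (h3 : W ≤ 2 * C * n ^ ((52515 : ℝ) / 10000))
    (h4 : T ^ 2 * E2 ^ 3 ≤ W * E3 ^ 2) (hE30 : 0 ≤ E3) (hE20 : 0 ≤ E2) (hκ0 : 0 ≤ κ)
    (hκ : κ ≤ 2 * n ^ ((615 : ℝ) / 1000))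
    (h5 : E3 ≤ 2 * (κ * n ^ 2) * E2 + 8 * (n ^ 4 * S4))
    (h6 : S4 ≤ 4 * (4 * C ^ 2 * n ^ 5 * n ^ ((1 : ℝ) / 200)) * (1 + Real.log n)) : False := by
  have hn1 : 1 ≤ n := by linarith
  have hnp : 0 < n := by linarith
  have p2 : n ^ 2 = n ^ (2 : ℝ) := by norm_cast
  have p4 : n ^ 4 = n ^ (4 : ℝ) := by norm_cast
  have p5 : n ^ 5 = n ^ (5 : ℝ) := by norm_cast
  have p8 : n ^ 8 = n ^ (8 : ℝ) := by norm_cast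
  have hlog : 1 + Real.log n ≤ 11 * n ^ ((1 : ℝ) / 10) := by
    have a := Real.log_le_rpow_div (x := n) (ε := 1 / 10) hnp.le (by norm_num)
    have b : 1 ≤ n ^ ((1 : ℝ) / 10) := Real.one_le_rpow hn1 (by norm_num)
    have e : n ^ ((1 : ℝ) / 10) / (1 / 10) = 10 * n ^ ((1 : ℝ) / 10) := by ring
    linarith
  have hE3 : E3 ≤ 1416 * C ^ 2 * n ^ ((9115 : ℝ) / 1000) := by
    have a : 2 * (κ * n ^ 2) * E2 ≤ 8 * C * n ^ ((9115 : ℝ) / 1000) := by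
      calc 2 * (κ * n ^ 2) * E2 ≤ 2 * ((2 * n ^ ((615 : ℝ) / 1000)) * n ^ 2) * (2 * C * n ^ ((65 : ℝ) / 10)) := by
            gcongr
        _ = 8 * C * (n ^ ((615 : ℝ) / 1000) * n ^ (2 : ℝ) * n ^ ((65 : ℝ) / 10)) := by
            rw [p2]; ring
        _ = _ := by
            rw [rd_rp n hnp _ _ _ rfl, rd_rp n hnp _ _ _ rfl]; norm_num
    have b : 8 * (n ^ 4 * S4) ≤ 1408 * C ^ 2 * n ^ ((9115 : ℝ) / 1000) := by
      calc 8 * (n ^ 4 * S4) ≤ 8 * (n ^ 4 * (4 * (4 * C ^ 2 * n ^ 5 * n ^ ((1 : ℝ) / 200)) *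
            (11 * n ^ ((1 : ℝ) / 10)))) := by
            refine mul_le_mul_of_nonneg_left (mul_le_mul_of_nonneg_left (h6.trans ?_)
              (by positivity)) (by norm_num)
            gcongr
        _ = 1408 * C ^ 2 * (n ^ (4 : ℝ) * n ^ (5 : ℝ) * n ^ ((1 : ℝ) / 200) * n ^ ((1 : ℝ) / 10)) := by
            rw [p4, p5]; ring
        _ ≤ _ := by
            rw [rd_rp n hnp _ _ _ rfl, rd_rp n hnp _ _ _ rfl, rd_rp n hnp _ _ _ rfl]
            refine mul_le_mul_of_nonneg_left (rd_rm n hn1 _ _ (by norm_num)) (by positivity)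
    have c : 8 * C * n ^ ((9115 : ℝ) / 1000) ≤ 8 * C ^ 2 * n ^ ((9115 : ℝ) / 1000) := by
      have : C ≤ C ^ 2 := by nlinarith
      gcongr
    linarith
  have hE2 : n ^ ((6499 : ℝ) / 1000) / 16 ≤ E2 := by
    have a : n ^ 8 / 16 ≤ n ^ ((1501 : ℝ) / 1000) * E2 := by
      calc n ^ 8 / 16 = (n ^ 2 / 2) ^ 4 := by ring
        _ ≤ T ^ 4 := by gcongr
        _ ≤ g * E2 := h1
        _ ≤ _ := by gcongr
    refine le_of_mul_le_mul_left (a := n ^ ((1501 : ℝ) / 1000)) ?_ (by positivity)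
    refine le_trans (le_of_eq ?_) a
    rw [p8, ← mul_div_assoc, rd_rp n hnp _ _ _ rfl]; norm_num
  have hlow : n ^ ((23497 : ℝ) / 1000) / 16384 ≤ T ^ 2 * E2 ^ 3 := by
    calc n ^ ((23497 : ℝ) / 1000) / 16384
        = (n ^ 2 / 2) ^ 2 * (n ^ ((6499 : ℝ) / 1000) / 16) ^ 3 := by
          have : n ^ ((23497 : ℝ) / 1000) = (n ^ 2) ^ 2 * (n ^ ((6499 : ℝ) / 1000)) ^ 3 := by
            rw [← Real.rpow_natCast (n ^ ((6499 : ℝ) / 1000)) 3, ← Real.rpow_mul hnp.le,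
              ← pow_mul, ← Real.rpow_natCast n (2 * 2), rd_rp n hnp _ _ _ rfl]
            norm_num
          rw [this]; ring
      _ ≤ _ := by gcongr
  have hup : W * E3 ^ 2 ≤ 2 * 1416 ^ 2 * C ^ 5 * n ^ ((234815 : ℝ) / 10000) := by
    calc W * E3 ^ 2 ≤ (2 * C * n ^ ((52515 : ℝ) / 10000)) * (1416 * C ^ 2 * n ^ ((9115 : ℝ) / 1000)) ^ 2 := by
          refine (mul_le_mul_of_nonneg_right h3 (sq_nonneg _)).trans ?_
          gcongr
      _ = 2 * 1416 ^ 2 * C ^ 5 * (n ^ ((52515 : ℝ) / 10000) * n ^ ((9115 : ℝ) / 1000) * n ^ ((9115 : ℝ) / 1000)) := by ring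
      _ = _ := by
          rw [rd_rp n hnp _ _ _ rfl, rd_rp n hnp _ _ _ rfl]; norm_num
  have h7 : n ^ ((155 : ℝ) / 10000) ≤ 32768 * 1416 ^ 2 * C ^ 5 := by
    refine le_of_mul_le_mul_right (a := n ^ ((234815 : ℝ) / 10000)) ?_ (by positivity)
    have e : n ^ ((155 : ℝ) / 10000) * n ^ ((234815 : ℝ) / 10000) = n ^ ((23497 : ℝ) / 1000) := by
      rw [rd_rp n hnp _ _ _ rfl]; norm_num
    rw [e]
    linarith
  have h8 := rd_rm n hn1 (1 / 100) (155 / 10000) (by norm_num)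
  linarith

theorem rd_main_core (C : ℝ) (hC1 : 1 ≤ C) (hC : rdHyp C) (p : ℕ) [Fact p.Prime]
    (A G : Finset (ZMod p)) (hA : 2 ≤ A.card) (hG0 : ∀ g ∈ G, g ≠ 0)
    (hG : ∀ u ∈ A.offDiag, ∀ v ∈ A.offDiag, rdd u * rdd v ∈ G)
    (hp : (A.card : ℝ) ^ ((32 : ℝ) / 9) ≤ (p : ℝ) ^ 2)
    (hN : 32768 * 1416 ^ 2 * C ^ 5 < (A.card : ℝ) ^ ((1 : ℝ) / 100)) :
    (A.card : ℝ) ^ ((1501 : ℝ) / 1000) ≤ G.card := by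
  by_contra hcon
  push Not at hcon
  set n : ℝ := (A.card : ℝ) with hn
  have hn2 : 2 ≤ n := by rw [hn]; exact_mod_cast hA
  have hn1 : 1 ≤ n := by linarith
  have hnp : 0 < n := by linarith
  have hC5 : 1 ≤ C ^ 5 := one_le_pow₀ hC1
  have hC25 : C ^ 2 ≤ C ^ 5 := pow_le_pow_right₀ hC1 (by norm_num)
  have hC15 : C ≤ C ^ 5 := by
    calc C = C ^ 1 := (pow_one C).symm
      _ ≤ C ^ 5 := pow_le_pow_right₀ hC1 (by norm_num)
  have h1000 : 1000 ≤ n ^ ((1 : ℝ) / 100) := by linarith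
  have p3 : n ^ 2 * n = n ^ (3 : ℝ) := by
    rw [show n ^ 2 * n = n ^ 3 by ring]; norm_cast
  have p2 : n ^ 2 = n ^ (2 : ℝ) := by norm_cast
  have hpm : ∀ a : ℝ, a ≤ 3545 / 1000 → n ^ a ≤ (p : ℝ) ^ 2 / 1000 := by
    intro a ha
    have e1 : n ^ ((1 : ℝ) / 100) * n ^ a ≤ n ^ ((32 : ℝ) / 9) := by
      rw [rd_rp n hnp _ _ _ rfl]
      exact rd_rm n hn1 _ _ (by linarith)
    have e2 : 1000 * n ^ a ≤ n ^ ((1 : ℝ) / 100) * n ^ a := by gcongr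
    linarith
  set X := A.offDiag with hX
  have hT : n ^ 2 / 2 ≤ (X.card : ℝ) := by
    rw [hX, Finset.offDiag_card, Nat.cast_sub (Nat.le_mul_self _)]
    push_cast
    rw [← hn]
    nlinarith
  -- E2
  have hE2up : (∑ s, ((rdP X rdd s).card : ℝ) ^ 2) ≤ 2 * C * n ^ ((65 : ℝ) / 10) := by
    refine (rd_E2up C hC p A (by omega) (by rw [← hn, p3]; exact hpm _ (by norm_num))).trans ?_
    rw [← hn, p3, ← Real.rpow_mul hnp.le, ← Real.rpow_mul hnp.le]
    have a : n * n ^ ((3 : ℝ) * (1 + 1 / 1000)) ≤ n ^ ((45 : ℝ) / 10) := by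
      nth_rewrite 1 [← Real.rpow_one n]
      rw [rd_rp n hnp _ _ _ rfl]
      exact rd_rm n hn1 _ _ (by norm_num)
    have b : n ^ ((3 : ℝ) * (3 / 2)) = n ^ ((45 : ℝ) / 10) := by norm_num
    rw [b]
    calc C * (n ^ ((45 : ℝ) / 10) + n * n ^ ((3 : ℝ) * (1 + 1 / 1000))) * n ^ 2
        ≤ C * (n ^ ((45 : ℝ) / 10) + n ^ ((45 : ℝ) / 10)) * n ^ 2 := by gcongr
      _ = 2 * C * (n ^ ((45 : ℝ) / 10) * n ^ (2 : ℝ)) := by rw [p2]; ring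
      _ = _ := by rw [rd_rp n hnp _ _ _ rfl]; norm_num
  have hE2low : (X.card : ℝ) ^ 4 ≤ G.card * (∑ s, ((rdP X rdd s).card : ℝ) ^ 2) := by
    exact_mod_cast rd_E2low X rdd (rdd_ne A) G hG
  set E2 := (∑ s, ((rdP X rdd s).card : ℝ) ^ 2) with hE2
  have hE20 : 0 ≤ E2 := Finset.sum_nonneg fun s _ => sq_nonneg _
  have hAG : A.card ≤ G.card := by
    have a : n ^ 8 / 16 ≤ G.card * (2 * C * n ^ ((65 : ℝ) / 10)) := by
      calc n ^ 8 / 16 = (n ^ 2 / 2) ^ 4 := by ring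
        _ ≤ (X.card : ℝ) ^ 4 := by gcongr
        _ ≤ _ := hE2low
        _ ≤ _ := by gcongr
    have b : n * (2 * C * n ^ ((65 : ℝ) / 10)) ≤ n ^ 8 / 16 := by
      have e : n ^ 8 = n ^ ((5 : ℝ) / 10) * n ^ (1 : ℝ) * n ^ ((65 : ℝ) / 10) := by
        rw [rd_rp n hnp _ _ _ rfl, rd_rp n hnp _ _ _ rfl, ← Real.rpow_natCast]; norm_num
      have e2 : 32 * C ≤ n ^ ((5 : ℝ) / 10) := by
        have := rd_rm n hn1 (1 / 100) (5 / 10) (by norm_num)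
        linarith
      rw [e, Real.rpow_one]
      have : 32 * C * n * n ^ ((65 : ℝ) / 10) ≤ n ^ ((5 : ℝ) / 10) * n * n ^ ((65 : ℝ) / 10) := by
        gcongr
      linarith
    have c := le_of_mul_le_mul_right (b.trans a) (by positivity)
    rw [hn] at c
    exact_mod_cast c
  -- W
  have hng : n ^ 2 * (G.card : ℝ) ≤ n ^ ((3501 : ℝ) / 1000) := by
    calc n ^ 2 * (G.card : ℝ) ≤ n ^ (2 : ℝ) * n ^ ((1501 : ℝ) / 1000) := by
          rw [p2]; gcongr
      _ = _ := by rw [rd_rp n hnp _ _ _ rfl]; norm_num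
  have hWup : (∑ q, ((rdP X rdd q).card : ℝ) * (rdr G q).card) ≤
      2 * C * n ^ ((52515 : ℝ) / 10000) := by
    refine (rd_Wup C hC p A G hG0 hAG (by omega) (hng.trans (hpm _ (by norm_num)))).trans ?_
    rw [← hn]
    have a : (n ^ 2 * (G.card : ℝ)) ^ ((3 : ℝ) / 2) ≤ n ^ ((52515 : ℝ) / 10000) := by
      calc _ ≤ (n ^ ((3501 : ℝ) / 1000)) ^ ((3 : ℝ) / 2) := by gcongr
        _ = _ := by rw [← Real.rpow_mul hnp.le]; norm_num
    have b : (G.card : ℝ) * (n ^ 2 * (G.card : ℝ)) ^ (1 + (1 : ℝ) / 1000) ≤ n ^ ((52515 : ℝ) / 10000) := by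
      calc _ ≤ n ^ ((1501 : ℝ) / 1000) * (n ^ ((3501 : ℝ) / 1000)) ^ (1 + (1 : ℝ) / 1000) := by gcongr
        _ ≤ _ := by
          rw [← Real.rpow_mul hnp.le, rd_rp n hnp _ _ _ rfl]
          exact rd_rm n hn1 _ _ (by norm_num)
    calc _ ≤ C * (n ^ ((52515 : ℝ) / 10000) + n ^ ((52515 : ℝ) / 10000)) := by gcongr
      _ = _ := by ring
  -- rich lines
  set κ := ⌈n ^ ((615 : ℝ) / 1000)⌉₊ with hκ
  have hx1 : 1 < n ^ ((615 : ℝ) / 1000) := Real.one_lt_rpow (by linarith) (by norm_num)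
  have hκ2 : 2 ≤ κ := by
    have : 1 < κ := Nat.lt_ceil.2 (by exact_mod_cast hx1)
    omega
  have hκN : κ ≤ A.card := by
    refine Nat.ceil_le.2 ?_
    calc n ^ ((615 : ℝ) / 1000) ≤ n ^ (1 : ℝ) := rd_rm n hn1 _ _ (by norm_num)
      _ = _ := Real.rpow_one n
  have hκr : (κ : ℝ) ≤ 2 * n ^ ((615 : ℝ) / 1000) := by
    have h9 : (κ : ℝ) < n ^ ((615 : ℝ) / 1000) + 1 := Nat.ceil_lt_add_one (by positivity)
    linarith
  have hS4 := rd_S4 p A κ (4 * C ^ 2 * n ^ 5 * n ^ ((1 : ℝ) / 200)) hκN (by omega)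
    (fun k hk1 hk2 => rd_rich_all C hC1 hC p A (by omega) hp (by linarith) k (by omega) hk2
      ((Nat.le_ceil _).trans (by exact_mod_cast hk1)))
  have hE3 := rd_E3 p A κ
  have hH := rd_holder X rdd (rdd_ne A) G hG
  exact rd_core_real C n X.card G.card E2 _ _ κ _ hC1 hn2 hT hcon.le (Nat.cast_nonneg _) hN
    hE2low hE2up hWup hH (Finset.sum_nonneg fun s _ => pow_nonneg (Nat.cast_nonneg _) _) hE20
    (Nat.cast_nonneg _) hκr hE3 hS4

theorem stmt5 :
    ∃ c : ℝ, 0 < c ∧ ∃ c' : ℝ, 0 < c' ∧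
      ∀ (p : ℕ), p.Prime → Odd p →
        ∀ A : Finset (ZMod p), 2 ≤ A.card → (A.card : ℝ) ≤ (p : ℝ) ^ ((9 : ℝ) / 16) →
          c' * min (p : ℝ) ((A.card : ℝ) ^ ((3 : ℝ) / 2 + c)) ≤
            ((prodSet p (diffSet p A A) (diffSet p A A)).card : ℝ) := by
  obtain ⟨C, hC1, hC⟩ := rd_inc_bound
  have hC5 : 1 ≤ C ^ 5 := one_le_pow₀ hC1
  set K : ℝ := 32768 * 1416 ^ 2 * C ^ 5 with hK
  have hK1 : 1 ≤ K := by rw [hK]; linarith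
  set N0 : ℝ := (K ^ 100) ^ ((1501 : ℝ) / 1000) with hN0
  have hN01 : 1 ≤ N0 := Real.one_le_rpow (one_le_pow₀ hK1) (by norm_num)
  refine ⟨1 / 1000, by norm_num, 1 / N0, by positivity, ?_⟩
  intro p hpp _ A hA hAp
  haveI : Fact p.Prime := ⟨hpp⟩
  set n : ℝ := (A.card : ℝ) with hn
  have hn2 : 2 ≤ n := by rw [hn]; exact_mod_cast hA
  have hnp : 0 < n := by linarith
  set Γ := prodSet p (diffSet p A A) (diffSet p A A) with hΓ
  have hexp : (3 : ℝ) / 2 + 1 / 1000 = 1501 / 1000 := by norm_num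
  rw [hexp]
  have hmem : ∀ u ∈ A.offDiag, ∀ v ∈ A.offDiag, rdd u * rdd v ∈ Γ := by
    intro u hu v hv
    rw [Finset.mem_offDiag] at hu hv
    have hd : ∀ w : ZMod p × ZMod p, w.1 ∈ A → w.2 ∈ A → rdd w ∈ diffSet p A A := by
      intro w h1 h2
      exact Finset.mem_image.2 ⟨w, Finset.mem_product.2 ⟨h1, h2⟩, rfl⟩
    exact Finset.mem_image.2 ⟨(rdd u, rdd v),
      Finset.mem_product.2 ⟨hd u hu.1 hu.2.1, hd v hv.1 hv.2.1⟩, rfl⟩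
  have hmin : min (p : ℝ) (n ^ ((1501 : ℝ) / 1000)) ≤ n ^ ((1501 : ℝ) / 1000) := min_le_right _ _
  rcases lt_or_ge K (n ^ ((1 : ℝ) / 100)) with hc | hc
  · have hp : n ^ ((32 : ℝ) / 9) ≤ (p : ℝ) ^ 2 := by
      calc n ^ ((32 : ℝ) / 9) ≤ ((p : ℝ) ^ ((9 : ℝ) / 16)) ^ ((32 : ℝ) / 9) := by gcongr
        _ = (p : ℝ) ^ 2 := by
          rw [← Real.rpow_mul (Nat.cast_nonneg _), ← Real.rpow_natCast]; norm_num
    have h := rd_main_core C hC1 hC p A (Γ.erase 0) hA (fun g hg => (Finset.mem_erase.1 hg).1)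
      (fun u hu v hv => Finset.mem_erase.2
        ⟨mul_ne_zero (rdd_ne A u hu) (rdd_ne A v hv), hmem u hu v hv⟩) hp hc
    have h2 : ((Γ.erase 0).card : ℝ) ≤ Γ.card := by
      exact_mod_cast Finset.card_erase_le
    have h3 : 1 / N0 ≤ 1 := by
      rw [div_le_one (by linarith)]; exact hN01
    have h4 : 0 ≤ min (p : ℝ) (n ^ ((1501 : ℝ) / 1000)) := by positivity
    calc 1 / N0 * min (p : ℝ) (n ^ ((1501 : ℝ) / 1000)) ≤ 1 * min (p : ℝ) (n ^ ((1501 : ℝ) / 1000)) := by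
          gcongr
      _ ≤ n ^ ((1501 : ℝ) / 1000) := by rw [one_mul]; exact hmin
      _ ≤ _ := h.trans h2
  · have h1 : n ≤ K ^ 100 := by
      calc n = (n ^ ((1 : ℝ) / 100)) ^ 100 := by
            rw [← Real.rpow_natCast, ← Real.rpow_mul hnp.le]; norm_num
        _ ≤ _ := by gcongr
    have h2 : n ^ ((1501 : ℝ) / 1000) ≤ N0 := by
      rw [hN0]; gcongr
    have h3 : 1 ≤ Γ.card := by
      obtain ⟨x, hx, y, hy, hxy⟩ := Finset.one_lt_card.1 hA
      have hu : (x, y) ∈ A.offDiag := Finset.mem_offDiag.2 ⟨hx, hy, hxy⟩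
      exact Finset.card_pos.2 ⟨_, hmem _ hu _ hu⟩
    have h4 : (1 : ℝ) ≤ Γ.card := by exact_mod_cast h3
    refine le_trans ?_ h4
    rw [one_div, inv_mul_le_iff₀ (by linarith), mul_one]
    exact hmin.trans h2
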